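/- arXiv:1409.5782 — 4 statements merged into one kernel-verified Lean document; each statement's English description precedes it below -/
import Mathlib

section
/- Let K ⊂ ℝ² be an equilateral triangle centered at the origin and let K° = {p : ⟨p,q⟩ ≤ 1 for all q ∈ K} be its polar body. Then ξ_{K°}(K − K) = 3·ξ_{K°}(K); in particular the inequality ξ_T(K−K) ≤ (n+1)ξ_T(K) is sharp in the plane. -/
open scoped RealInnerProductSpace Pointwise
open MeasureTheory

/-- A convex body: compact, convex, with nonempty interior. -/
def IsConvexBody {n : ℕ} (K : Set (EuclideanSpace ℝ (Fin n))) : Prop :=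
  IsCompact K ∧ Convex ℝ K ∧ (interior K).Nonempty

/-- The (possibly non-symmetric) norm with unit ball `T°`: `‖v‖_T = max_{p ∈ T} ⟨p, v⟩`. -/
noncomputable def suppNorm {n : ℕ} (T : Set (EuclideanSpace ℝ (Fin n)))
    (v : EuclideanSpace ℝ (Fin n)) : ℝ :=
  sSup ((fun p => ⟪p, v⟫) '' T)

/-- The vertex set `q 0, …, q (m-1)` cannot be translated into the interior of `K`. -/
def NotTranslatableInto {n : ℕ} (m : ℕ) (q : ℕ → EuclideanSpace ℝ (Fin n))
    (K : Set (EuclideanSpace ℝ (Fin n))) : Prop :=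
  ∀ t : EuclideanSpace ℝ (Fin n), ∃ i < m, q i + t ∉ interior K

/-- `ξ_T(K)`: the length of the shortest closed billiard trajectory in `K` with geometry
given by `T`, characterized à la Bezdek–Bezdek as the infimum of `ℓ_T`-lengths of closed
polygonal lines whose vertex set cannot be translated into the interior of `K`. -/
noncomputable def xi {n : ℕ} (T K : Set (EuclideanSpace ℝ (Fin n))) : ℝ :=
  sInf {ℓ : ℝ | ∃ m : ℕ, 2 ≤ m ∧ ∃ q : ℕ → EuclideanSpace ℝ (Fin n),
    NotTranslatableInto m q K ∧
    ℓ = ∑ i ∈ Finset.range m, suppNorm T (q ((i + 1) % m) - q i)}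

/-- `ξ_B(K)`: the Euclidean version of `xi`. -/
noncomputable def xiB {n : ℕ} (K : Set (EuclideanSpace ℝ (Fin n))) : ℝ :=
  sInf {ℓ : ℝ | ∃ m : ℕ, 2 ≤ m ∧ ∃ q : ℕ → EuclideanSpace ℝ (Fin n),
    NotTranslatableInto m q K ∧
    ℓ = ∑ i ∈ Finset.range m, ‖q ((i + 1) % m) - q i‖}

/-- The Euclidean width of `K`: the minimum over unit directions of the breadth. -/
noncomputable def widthB {n : ℕ} (K : Set (EuclideanSpace ℝ (Fin n))) : ℝ :=
  sInf {w : ℝ | ∃ p : EuclideanSpace ℝ (Fin n), ‖p‖ = 1 ∧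
    w = sSup ((fun q => ⟪p, q⟫) '' K) - sInf ((fun q => ⟪p, q⟫) '' K)}

/-- The polar body `K° = {p : ⟨p, q⟩ ≤ 1 ∀ q ∈ K}`. -/
def polarBody {n : ℕ} (K : Set (EuclideanSpace ℝ (Fin n))) :
    Set (EuclideanSpace ℝ (Fin n)) :=
  {p | ∀ q ∈ K, ⟪p, q⟫ ≤ 1}

/-- The length of a closed polygonal line, for a gauge `N`. -/
noncomputable def closedLength {E : Type*} [AddCommGroup E] (N : E → ℝ) (m : ℕ) (q : ℕ → E) : ℝ :=
  ∑ i ∈ Finset.range m, N (q ((i + 1) % m) - q i)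

section ClosedLength

variable {E : Type*} [AddCommGroup E] {N : E → ℝ}

lemma gauge_sub_le_sum_Ico (h0 : N 0 ≤ 0) (hadd : ∀ u v, N (u + v) ≤ N u + N v)
    (q : ℕ → E) {i j : ℕ} (hij : i ≤ j) :
    N (q j - q i) ≤ ∑ k ∈ Finset.Ico i j, N (q (k + 1) - q k) := by
  induction j, hij using Nat.le_induction with
  | base => simpa using h0
  | succ j hij ih =>
    rw [Finset.sum_Ico_succ_top hij]
    have h := hadd (q (j + 1) - q j) (q j - q i)
    rw [sub_add_sub_cancel] at h
    linarith

lemma cyclic_sum_le_closedLength_of_le (h0 : N 0 ≤ 0) (hadd : ∀ u v, N (u + v) ≤ N u + N v)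
    (q : ℕ → E) {m i j k : ℕ} (hij : i ≤ j) (hjk : j ≤ k) (hk : k < m) :
    N (q j - q i) + N (q k - q j) + N (q i - q k) ≤ closedLength N m q := by
  obtain ⟨n, rfl⟩ : ∃ n, m = n + 1 := ⟨m - 1, by omega⟩
  have hkn : k ≤ n := by omega
  have hsum : closedLength N (n + 1) q =
      ∑ l ∈ Finset.Ico 0 n, N (q (l + 1) - q l) + N (q 0 - q n) := by
    rw [closedLength, Finset.sum_range_succ, Nat.mod_self, Finset.range_eq_Ico]
    congr 1
    refine Finset.sum_congr rfl fun l hl => ?_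
    rw [Nat.mod_eq_of_lt (by have := (Finset.mem_Ico.1 hl).2; omega)]
  rw [hsum, ← Finset.sum_Ico_consecutive _ (Nat.zero_le k) hkn,
    ← Finset.sum_Ico_consecutive _ (Nat.zero_le j) hjk,
    ← Finset.sum_Ico_consecutive _ (Nat.zero_le i) hij]
  have e1 := gauge_sub_le_sum_Ico h0 hadd q (Nat.zero_le i)
  have e2 := gauge_sub_le_sum_Ico h0 hadd q hij
  have e3 := gauge_sub_le_sum_Ico h0 hadd q hjk
  have e4 := gauge_sub_le_sum_Ico h0 hadd q hkn
  have e5 := hadd (q i - q 0) (q 0 - q n)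
  have e6 := hadd (q i - q n) (q n - q k)
  rw [sub_add_sub_cancel] at e5 e6
  linarith

lemma cyclic_sum_le_closedLength (h0 : N 0 ≤ 0) (hadd : ∀ u v, N (u + v) ≤ N u + N v)
    (q : ℕ → E) {m i j k : ℕ} (hi : i < m) (hj : j < m) (hk : k < m) :
    N (q j - q i) + N (q k - q j) + N (q i - q k) ≤ closedLength N m q ∨
      N (q k - q i) + N (q j - q k) + N (q i - q j) ≤ closedLength N m q := by
  have key {a b c : ℕ} (hab : a ≤ b) (hbc : b ≤ c) (hc : c < m) :=
    cyclic_sum_le_closedLength_of_le h0 hadd q hab hbc hc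
  rcases le_total i j with hij | hij <;> rcases le_total j k with hjk | hjk <;>
    rcases le_total i k with hik | hik
  · left; linarith [key hij hjk hk]
  · left; linarith [key hij hjk hk]
  · right; linarith [key hik hjk hj]
  · left; linarith [key hik hij hj]
  · right; linarith [key hij hik hk]
  · left; linarith [key hjk hik hi]
  · right; linarith [key hjk hij hi]
  · right; linarith [key hjk hij hi]

end ClosedLength

lemma exists_sum_eq_zero_of_lt {a b c a' b' c' : ℝ} (ha : a < a') (hb : b < b') (hc : c < c')
    (hlow : a + b + c < 0) (hupp : 0 < a' + b' + c') :
    ∃ x y z, x + y + z = 0 ∧ (a < x ∧ x < a') ∧ (b < y ∧ y < b') ∧ (c < z ∧ z < c') := by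
  obtain ⟨s, hs0, hs1, hs⟩ : ∃ s : ℝ, 0 < s ∧ s < 1 ∧
      a + b + c + s * ((a' + b' + c') - (a + b + c)) = 0 := by
    have hD : 0 < (a' + b' + c') - (a + b + c) := by linarith
    refine ⟨-(a + b + c) / ((a' + b' + c') - (a + b + c)), div_pos (by linarith) hD, ?_, ?_⟩
    · rw [div_lt_one hD]; linarith
    · field_simp; ring
  refine ⟨a + s * (a' - a), b + s * (b' - b), c + s * (c' - c), by linarith, ?_, ?_, ?_⟩ <;>
    constructor <;> nlinarith

/-- `f, g, h` are the outer facet functionals of a triangle `K` with centroid `0`: they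
describe the interiors of `K` and `K - K` and the gauge of `K`. -/
structure IsFacetTriple {n : ℕ} (K : Set (EuclideanSpace ℝ (Fin n)))
    (f g h : EuclideanSpace ℝ (Fin n) →L[ℝ] ℝ) : Prop where
  sum_eq_zero : ∀ x, f x + g x + h x = 0
  exists_eq : ∀ a b c : ℝ, a + b + c = 0 → ∃ x, f x = a ∧ g x = b ∧ h x = c
  mem_interior : ∀ x, x ∈ interior K ↔ f x < 1 ∧ g x < 1 ∧ h x < 1
  mem_interior_sub : ∀ x, x ∈ interior (K - K) ↔
    (-3 < f x ∧ f x < 3) ∧ (-3 < g x ∧ g x < 3) ∧ (-3 < h x ∧ h x < 3)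
  suppNorm_eq : ∀ v, suppNorm (polarBody K) v = max (f v) (max (g v) (h v))

namespace IsFacetTriple

variable {n : ℕ} {K : Set (EuclideanSpace ℝ (Fin n))} {f g h : EuclideanSpace ℝ (Fin n) →L[ℝ] ℝ}

lemma le_suppNorm (H : IsFacetTriple K f g h) (v : EuclideanSpace ℝ (Fin n)) :
    f v ≤ suppNorm (polarBody K) v ∧ g v ≤ suppNorm (polarBody K) v ∧
      h v ≤ suppNorm (polarBody K) v := by
  rw [H.suppNorm_eq]
  simp

lemma suppNorm_zero_le (H : IsFacetTriple K f g h) : suppNorm (polarBody K) 0 ≤ 0 := by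
  simp [H.suppNorm_eq]

lemma suppNorm_add_le (H : IsFacetTriple K f g h) (u v : EuclideanSpace ℝ (Fin n)) :
    suppNorm (polarBody K) (u + v) ≤ suppNorm (polarBody K) u + suppNorm (polarBody K) v := by
  have hu := H.le_suppNorm u
  have hv := H.le_suppNorm v
  rw [H.suppNorm_eq (u + v)]
  simp only [map_add]
  refine max_le ?_ (max_le ?_ ?_) <;> linarith

/-- Any three vertices bound the length from below by the sum of the facet functionals, and
also by minus that sum. -/
lemma abs_add_add_le_closedLength (H : IsFacetTriple K f g h) {m i j k : ℕ}
    (q : ℕ → EuclideanSpace ℝ (Fin n)) (hi : i < m) (hj : j < m) (hk : k < m) :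
    |f (q i) + g (q j) + h (q k)| ≤ closedLength (suppNorm (polarBody K)) m q := by
  have si := H.sum_eq_zero (q i)
  have sj := H.sum_eq_zero (q j)
  have sk := H.sum_eq_zero (q k)
  have hL := cyclic_sum_le_closedLength H.suppNorm_zero_le H.suppNorm_add_le q hi hj hk
  have ij := H.le_suppNorm (q j - q i)
  have jk := H.le_suppNorm (q k - q j)
  have ki := H.le_suppNorm (q i - q k)
  have ji := H.le_suppNorm (q i - q j)
  have kj := H.le_suppNorm (q j - q k)
  have ik := H.le_suppNorm (q k - q i)
  simp only [map_sub] at ij jk ki ji kj ik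
  rw [abs_le]
  rcases hL with hL | hL <;> constructor <;> linarith

/-- The breadth in a facet direction is at most two thirds of the length. -/
lemma breadth_le_closedLength (H : IsFacetTriple K f g h) {m i j : ℕ}
    (q : ℕ → EuclideanSpace ℝ (Fin n)) (hi : i < m) (hj : j < m) :
    3 / 2 * (f (q i) - f (q j)) ≤ closedLength (suppNorm (polarBody K)) m q ∧
    3 / 2 * (g (q i) - g (q j)) ≤ closedLength (suppNorm (polarBody K)) m q ∧
    3 / 2 * (h (q i) - h (q j)) ≤ closedLength (suppNorm (polarBody K)) m q := by
  have si := H.sum_eq_zero (q i)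
  have sj := H.sum_eq_zero (q j)
  have hL := cyclic_sum_le_closedLength H.suppNorm_zero_le H.suppNorm_add_le q hi hj hj
  rw [or_self] at hL
  have ij := H.le_suppNorm (q j - q i)
  have ji := H.le_suppNorm (q i - q j)
  have jj := H.le_suppNorm (q j - q j)
  simp only [map_sub] at ij ji jj
  refine ⟨?_, ?_, ?_⟩ <;> linarith

lemma exists_forall_le (φ : EuclideanSpace ℝ (Fin n) →L[ℝ] ℝ) {m : ℕ} (hm : 2 ≤ m)
    (q : ℕ → EuclideanSpace ℝ (Fin n)) : ∃ i < m, ∀ l < m, φ (q l) ≤ φ (q i) := by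
  obtain ⟨i, hi, hmax⟩ := Finset.exists_max_image (Finset.range m) (fun l => φ (q l))
    ⟨0, by simp; omega⟩
  exact ⟨i, Finset.mem_range.1 hi, fun l hl => hmax l (Finset.mem_range.2 hl)⟩

lemma exists_forall_ge (φ : EuclideanSpace ℝ (Fin n) →L[ℝ] ℝ) {m : ℕ} (hm : 2 ≤ m)
    (q : ℕ → EuclideanSpace ℝ (Fin n)) : ∃ i < m, ∀ l < m, φ (q i) ≤ φ (q l) := by
  obtain ⟨i, hi, hmin⟩ := exists_forall_le (-φ) hm q
  exact ⟨i, hi, fun l hl => by simpa using hmin l hl⟩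

lemma three_le_closedLength (H : IsFacetTriple K f g h) {m : ℕ} (hm : 2 ≤ m)
    {q : ℕ → EuclideanSpace ℝ (Fin n)} (hq : NotTranslatableInto m q K) :
    3 ≤ closedLength (suppNorm (polarBody K)) m q := by
  obtain ⟨i, hi, hfi⟩ := exists_forall_le f hm q
  obtain ⟨j, hj, hgj⟩ := exists_forall_le g hm q
  obtain ⟨k, hk, hhk⟩ := exists_forall_le h hm q
  have hL := (le_abs_self _).trans (H.abs_add_add_le_closedLength q hi hj hk)
  by_contra! hlt
  set s := (3 - (f (q i) + g (q j) + h (q k))) / 3 with hs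
  obtain ⟨t, h1, h2, h3⟩ := H.exists_eq (1 - f (q i) - s) (1 - g (q j) - s) (1 - h (q k) - s)
    (by rw [hs]; ring)
  obtain ⟨l, hl, hnot⟩ := hq t
  refine hnot ((H.mem_interior _).2 ?_)
  have e1 := hfi l hl
  have e2 := hgj l hl
  have e3 := hhk l hl
  simp only [map_add, h1, h2, h3]
  refine ⟨?_, ?_, ?_⟩ <;> linarith

lemma nine_le_closedLength (H : IsFacetTriple K f g h) {m : ℕ} (hm : 2 ≤ m)
    {q : ℕ → EuclideanSpace ℝ (Fin n)} (hq : NotTranslatableInto m q (K - K)) :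
    9 ≤ closedLength (suppNorm (polarBody K)) m q := by
  obtain ⟨i, hi, hfi⟩ := exists_forall_le f hm q
  obtain ⟨j, hj, hgj⟩ := exists_forall_le g hm q
  obtain ⟨k, hk, hhk⟩ := exists_forall_le h hm q
  obtain ⟨i', hi', hfi'⟩ := exists_forall_ge f hm q
  obtain ⟨j', hj', hgj'⟩ := exists_forall_ge g hm q
  obtain ⟨k', hk', hhk'⟩ := exists_forall_ge h hm q
  have hL := (le_abs_self _).trans (H.abs_add_add_le_closedLength q hi hj hk)
  have hL' := (neg_le_abs _).trans (H.abs_add_add_le_closedLength q hi' hj' hk')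
  have hf := (H.breadth_le_closedLength q hi hi').1
  have hg := (H.breadth_le_closedLength q hj hj').2.1
  have hh := (H.breadth_le_closedLength q hk hk').2.2
  by_contra! hlt
  obtain ⟨x, y, z, hxyz, hx, hy, hz⟩ := exists_sum_eq_zero_of_lt
    (a := -3 - f (q i')) (a' := 3 - f (q i)) (b := -3 - g (q j')) (b' := 3 - g (q j))
    (c := -3 - h (q k')) (c' := 3 - h (q k))
    (by linarith) (by linarith) (by linarith) (by linarith) (by linarith)
  obtain ⟨t, rfl, rfl, rfl⟩ := H.exists_eq x y z hxyz
  obtain ⟨l, hl, hnot⟩ := hq t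
  refine hnot ((H.mem_interior_sub _).2 ?_)
  have e1 := hfi l hl
  have e2 := hgj l hl
  have e3 := hhk l hl
  have e1' := hfi' l hl
  have e2' := hgj' l hl
  have e3' := hhk' l hl
  simp only [map_add]
  refine ⟨⟨?_, ?_⟩, ⟨?_, ?_⟩, ?_, ?_⟩ <;> linarith

lemma xi_eq_three (H : IsFacetTriple K f g h) : xi (polarBody K) K = 3 := by
  refine IsLeast.csInf_eq ⟨?_, ?_⟩
  · obtain ⟨x, hx1, hx2, hx3⟩ := H.exists_eq (-2) 1 1 (by norm_num)
    obtain ⟨y, hy1, hy2, hy3⟩ := H.exists_eq (-1) (-1) 2 (by norm_num)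
    let q : ℕ → EuclideanSpace ℝ (Fin n) := fun i => if i = 0 then 0 else if i = 1 then x else y
    refine ⟨3, by norm_num, q, fun t => ?_, ?_⟩
    · by_contra! hall
      have h0 := ((H.mem_interior _).1 (hall 0 (by norm_num))).1
      have h1 := ((H.mem_interior _).1 (hall 1 (by norm_num))).2.1
      have h2 := ((H.mem_interior _).1 (hall 2 (by norm_num))).2.2
      have ht := H.sum_eq_zero t
      simp [q, hx2, hy3] at h0 h1 h2
      linarith
    · simp [q, Finset.sum_range_succ, H.suppNorm_eq, hx1, hx2, hx3, hy1, hy2, hy3]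
      norm_num
  · rintro _ ⟨m, hm, q, hq, rfl⟩
    exact H.three_le_closedLength hm hq

lemma xi_sub_eq_nine (H : IsFacetTriple K f g h) : xi (polarBody K) (K - K) = 9 := by
  refine IsLeast.csInf_eq ⟨?_, ?_⟩
  · obtain ⟨x, hx1, hx2, hx3⟩ := H.exists_eq 6 (-3) (-3) (by norm_num)
    let q : ℕ → EuclideanSpace ℝ (Fin n) := fun i => if i = 0 then 0 else x
    refine ⟨2, le_rfl, q, fun t => ?_, ?_⟩
    · by_contra! hall
      have h0 := ((H.mem_interior_sub _).1 (hall 0 (by norm_num))).1.1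
      have h1 := ((H.mem_interior_sub _).1 (hall 1 (by norm_num))).1.2
      simp [q, hx1] at h0 h1
      linarith
    · simp [q, Finset.sum_range_succ, H.suppNorm_eq, hx1, hx2, hx3]
      norm_num
  · rintro _ ⟨m, hm, q, hq, rfl⟩
    exact H.nine_le_closedLength hm hq

end IsFacetTriple

section Triangle

variable {n : ℕ} {A B C : EuclideanSpace ℝ (Fin n)} {f g h : EuclideanSpace ℝ (Fin n) →L[ℝ] ℝ}

lemma mem_convexHull_triple_of_weights {a b c : ℝ} (ha : 0 ≤ a) (hb : 0 ≤ b) (hc : 0 ≤ c)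
    (habc : a + b + c = 1) :
    a • A + b • B + c • C ∈ convexHull ℝ ({A, B, C} : Set (EuclideanSpace ℝ (Fin n))) := by
  have := (convex_convexHull ℝ ({A, B, C} : Set (EuclideanSpace ℝ (Fin n)))).sum_mem
    (t := Finset.univ) (w := ![a, b, c]) (z := ![A, B, C])
    (by simp [Fin.forall_fin_succ, ha, hb, hc]) (by simpa [Fin.sum_univ_three] using habc)
    (fun i _ => subset_convexHull ℝ _ (by fin_cases i <;> simp))
  simpa [Fin.sum_univ_three] using this

lemma mem_convexHull_triple_iff (hcent : A + B + C = 0)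
    (hf : f A = -2 ∧ f B = 1 ∧ f C = 1) (hg : g A = 1 ∧ g B = -2 ∧ g C = 1)
    (hh : h A = 1 ∧ h B = 1 ∧ h C = -2)
    (hrec : ∀ x, x = (-(1 / 3 : ℝ)) • (f x • A + g x • B + h x • C))
    (hsum : ∀ x, f x + g x + h x = 0) (x : EuclideanSpace ℝ (Fin n)) :
    x ∈ convexHull ℝ ({A, B, C} : Set (EuclideanSpace ℝ (Fin n))) ↔
      f x ≤ 1 ∧ g x ≤ 1 ∧ h x ≤ 1 := by
  constructor
  · intro hx
    have hconv (φ : EuclideanSpace ℝ (Fin n) →L[ℝ] ℝ) (hA : φ A ≤ 1) (hB : φ B ≤ 1)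
        (hC : φ C ≤ 1) : φ x ≤ 1 := by
      refine convexHull_min ?_ (convex_halfSpace_le φ.isLinear 1) hx
      rintro y (rfl | rfl | rfl) <;> assumption
    exact ⟨hconv f (by linarith) (by linarith) (by linarith),
      hconv g (by linarith) (by linarith) (by linarith),
      hconv h (by linarith) (by linarith) (by linarith)⟩
  · rintro ⟨h1, h2, h3⟩
    have hx : x = ((1 - f x) / 3) • A + ((1 - g x) / 3) • B + ((1 - h x) / 3) • C := by
      have : ((1 - f x) / 3) • A + ((1 - g x) / 3) • B + ((1 - h x) / 3) • C =
          (1 / 3 : ℝ) • (A + B + C) + (-(1 / 3 : ℝ)) • (f x • A + g x • B + h x • C) := by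
        module
      rw [this, hcent, smul_zero, zero_add]
      exact hrec x
    rw [hx]
    exact mem_convexHull_triple_of_weights (by linarith) (by linarith) (by linarith)
      (by linarith [hsum x])

lemma mem_convexHull_triple_sub_iff (hcent : A + B + C = 0)
    (hf : f A = -2 ∧ f B = 1 ∧ f C = 1) (hg : g A = 1 ∧ g B = -2 ∧ g C = 1)
    (hh : h A = 1 ∧ h B = 1 ∧ h C = -2)
    (hrec : ∀ x, x = (-(1 / 3 : ℝ)) • (f x • A + g x • B + h x • C))
    (hsum : ∀ x, f x + g x + h x = 0)
    (hex : ∀ a b c : ℝ, a + b + c = 0 → ∃ x, f x = a ∧ g x = b ∧ h x = c)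
    (x : EuclideanSpace ℝ (Fin n)) :
    x ∈ convexHull ℝ ({A, B, C} : Set (EuclideanSpace ℝ (Fin n))) -
        convexHull ℝ ({A, B, C} : Set (EuclideanSpace ℝ (Fin n))) ↔
      (-3 ≤ f x ∧ f x ≤ 3) ∧ (-3 ≤ g x ∧ g x ≤ 3) ∧ (-3 ≤ h x ∧ h x ≤ 3) := by
  have hmem := mem_convexHull_triple_iff hcent hf hg hh hrec hsum
  constructor
  · rintro ⟨y, hy, z, hz, rfl⟩
    have hy' := (hmem y).1 hy
    have hz' := (hmem z).1 hz
    have sy := hsum y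
    have sz := hsum z
    simp only [map_sub]
    refine ⟨⟨?_, ?_⟩, ⟨?_, ?_⟩, ?_, ?_⟩ <;> linarith
  · intro hx
    have sx := hsum x
    set a := min 1 (1 + f x) with ha
    set b := min 1 (1 + g x) with hb
    set c := min 1 (1 + h x) with hc
    have habc : 0 ≤ a + b + c := by
      rcases min_choice 1 (1 + f x) with h1 | h1 <;> rcases min_choice 1 (1 + g x) with h2 | h2 <;>
        rcases min_choice 1 (1 + h x) with h3 | h3 <;> rw [ha, hb, hc, h1, h2, h3] <;> linarith
    obtain ⟨y, h1, h2, h3⟩ := hex (a - (a + b + c) / 3) (b - (a + b + c) / 3)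
      (c - (a + b + c) / 3) (by ring)
    have ha1 := min_le_left 1 (1 + f x)
    have ha2 := min_le_right 1 (1 + f x)
    have hb1 := min_le_left 1 (1 + g x)
    have hb2 := min_le_right 1 (1 + g x)
    have hc1 := min_le_left 1 (1 + h x)
    have hc2 := min_le_right 1 (1 + h x)
    refine ⟨y, (hmem y).2 ?_, y - x, (hmem _).2 ?_, sub_sub_cancel y x⟩
    · rw [h1, h2, h3]
      refine ⟨?_, ?_, ?_⟩ <;> linarith
    · simp only [map_sub, h1, h2, h3]
      refine ⟨?_, ?_, ?_⟩ <;> linarith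

lemma isFacetTriple_convexHull {P Q R : EuclideanSpace ℝ (Fin n)} (hcent : A + B + C = 0)
    (hf : ⟪P, A⟫ = -2 ∧ ⟪P, B⟫ = 1 ∧ ⟪P, C⟫ = 1) (hg : ⟪Q, A⟫ = 1 ∧ ⟪Q, B⟫ = -2 ∧ ⟪Q, C⟫ = 1)
    (hh : ⟪R, A⟫ = 1 ∧ ⟪R, B⟫ = 1 ∧ ⟪R, C⟫ = -2) (hPQR : P + Q + R = 0)
    (hrec : ∀ x, x = (-(1 / 3 : ℝ)) • (⟪P, x⟫ • A + ⟪Q, x⟫ • B + ⟪R, x⟫ • C)) :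
    IsFacetTriple (convexHull ℝ {A, B, C}) (innerSL ℝ P) (innerSL ℝ Q) (innerSL ℝ R) := by
  have hsum (x : EuclideanSpace ℝ (Fin n)) : innerSL ℝ P x + innerSL ℝ Q x + innerSL ℝ R x = 0 := by
    simp [← inner_add_left, hPQR]
  have hex (a b c : ℝ) (habc : a + b + c = 0) :
      ∃ x, innerSL ℝ P x = a ∧ innerSL ℝ Q x = b ∧ innerSL ℝ R x = c := by
    refine ⟨(-(1 / 3 : ℝ)) • (a • A + b • B + c • C), ?_, ?_, ?_⟩ <;>
      simp [inner_add_right, inner_smul_right, hf, hg, hh] <;> linarith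
  have hmem := mem_convexHull_triple_iff (f := innerSL ℝ P) (g := innerSL ℝ Q) (h := innerSL ℝ R)
    hcent hf hg hh hrec hsum
  have hmem' := mem_convexHull_triple_sub_iff (f := innerSL ℝ P) (g := innerSL ℝ Q)
    (h := innerSL ℝ R) hcent hf hg hh hrec hsum hex
  have hP : IsOpenMap (innerSL ℝ P) := (innerSL ℝ P).isOpenMap fun a => by
    obtain ⟨x, hx, -⟩ := hex a (-a) 0 (by ring)
    exact ⟨x, hx⟩
  have hQ : IsOpenMap (innerSL ℝ Q) := (innerSL ℝ Q).isOpenMap fun a => by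
    obtain ⟨x, -, hx, -⟩ := hex (-a) a 0 (by ring)
    exact ⟨x, hx⟩
  have hR : IsOpenMap (innerSL ℝ R) := (innerSL ℝ R).isOpenMap fun a => by
    obtain ⟨x, -, -, hx⟩ := hex (-a) 0 a (by ring)
    exact ⟨x, hx⟩
  have hint (φ : EuclideanSpace ℝ (Fin n) →L[ℝ] ℝ) (hφ : IsOpenMap φ) (s : Set ℝ) :
      interior (φ ⁻¹' s) = φ ⁻¹' interior s :=
    (hφ.preimage_interior_eq_interior_preimage φ.continuous s).symm
  refine ⟨hsum, hex, fun x => ?_, fun x => ?_, fun v => ?_⟩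
  · have : convexHull ℝ {A, B, C} = innerSL ℝ P ⁻¹' Set.Iic 1 ∩
        (innerSL ℝ Q ⁻¹' Set.Iic 1 ∩ innerSL ℝ R ⁻¹' Set.Iic 1) := Set.ext hmem
    rw [this, interior_inter, interior_inter, hint _ hP, hint _ hQ, hint _ hR, interior_Iic]
    rfl
  · have : convexHull ℝ {A, B, C} - convexHull ℝ {A, B, C} = innerSL ℝ P ⁻¹' Set.Icc (-3) 3 ∩
        (innerSL ℝ Q ⁻¹' Set.Icc (-3) 3 ∩ innerSL ℝ R ⁻¹' Set.Icc (-3) 3) := Set.ext hmem'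
    rw [this, interior_inter, interior_inter, hint _ hP, hint _ hQ, hint _ hR, interior_Icc]
    rfl
  · set s := max (innerSL ℝ P v) (max (innerSL ℝ Q v) (innerSL ℝ R v)) with hs
    have hPs : ⟪P, v⟫ ≤ s := le_max_left _ _
    have hQs : ⟪Q, v⟫ ≤ s := (le_max_left _ _).trans (le_max_right _ _)
    have hRs : ⟪R, v⟫ ≤ s := (le_max_right _ _).trans (le_max_right _ _)
    have hsv : ⟪P, v⟫ + ⟪Q, v⟫ + ⟪R, v⟫ = 0 := hsum v
    have hle : ∀ y ∈ (fun p => ⟪p, v⟫) '' polarBody (convexHull ℝ {A, B, C}), y ≤ s := by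
      rintro _ ⟨p, hp, rfl⟩
      have hA : ⟪p, A⟫ ≤ 1 := hp A (subset_convexHull ℝ _ (by simp))
      have hB : ⟪p, B⟫ ≤ 1 := hp B (subset_convexHull ℝ _ (by simp))
      have hC : ⟪p, C⟫ ≤ 1 := hp C (subset_convexHull ℝ _ (by simp))
      have h0 : ⟪p, A⟫ + ⟪p, B⟫ + ⟪p, C⟫ = 0 := by simp [← inner_add_right, hcent]
      have hv : ⟪p, v⟫ = -(1 / 3) * (⟪P, v⟫ * ⟪p, A⟫ + ⟪Q, v⟫ * ⟪p, B⟫ + ⟪R, v⟫ * ⟪p, C⟫) := by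
        conv_lhs => rw [hrec v]
        simp only [inner_add_right, inner_smul_right]
      change ⟪p, v⟫ ≤ s
      rw [hv]
      have eA := mul_nonneg (sub_nonneg.2 hPs) (sub_nonneg.2 hA)
      have eB := mul_nonneg (sub_nonneg.2 hQs) (sub_nonneg.2 hB)
      have eC := mul_nonneg (sub_nonneg.2 hRs) (sub_nonneg.2 hC)
      have e0 : s * (⟪p, A⟫ + ⟪p, B⟫ + ⟪p, C⟫) = 0 := by rw [h0, mul_zero]
      linarith
    refine IsGreatest.csSup_eq ⟨?_, hle⟩
    rcases max_choice (innerSL ℝ P v) (max (innerSL ℝ Q v) (innerSL ℝ R v)) with h1 | h1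
    · rw [hs, h1]
      exact ⟨P, fun x hx => ((hmem x).1 hx).1, rfl⟩
    rcases max_choice (innerSL ℝ Q v) (innerSL ℝ R v) with h2 | h2
    · rw [hs, h1, h2]
      exact ⟨Q, fun x hx => ((hmem x).1 hx).2.1, rfl⟩
    · rw [hs, h1, h2]
      exact ⟨R, fun x hx => ((hmem x).1 hx).2.2, rfl⟩

end Triangle

lemma eq_of_inner_eq_of_det_ne_zero {A B x y : EuclideanSpace ℝ (Fin 2)}
    (hdet : A 0 * B 1 - A 1 * B 0 ≠ 0) (hA : ⟪A, x⟫ = ⟪A, y⟫) (hB : ⟪B, x⟫ = ⟪B, y⟫) : x = y := by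
  simp only [PiLp.inner_apply, Fin.sum_univ_two, RCLike.inner_apply, conj_trivial] at hA hB
  ext i
  fin_cases i
  · exact mul_left_cancel₀ hdet (by dsimp; linear_combination B 1 * hA - A 1 * hB)
  · exact mul_left_cancel₀ hdet (by dsimp; linear_combination A 0 * hB - B 0 * hA)

lemma exists_isFacetTriple_of_equilateral {A B C : EuclideanSpace ℝ (Fin 2)}
    (hpos : 0 < dist A B) (h1 : dist A B = dist B C) (h2 : dist B C = dist C A)
    (hcent : A + B + C = 0) : ∃ f g h, IsFacetTriple (convexHull ℝ {A, B, C}) f g h := by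
  have hC : C = -A - B := by rw [eq_neg_of_add_eq_zero_right hcent, neg_add']
  obtain ⟨r, hr⟩ : ∃ r, r = ⟪A, A⟫ := ⟨_, rfl⟩
  have sq (x y : EuclideanSpace ℝ (Fin 2)) : dist x y ^ 2 = ⟪x, x⟫ - 2 * ⟪x, y⟫ + ⟪y, y⟫ := by
    rw [dist_eq_norm, norm_sub_sq_real, real_inner_self_eq_norm_sq, real_inner_self_eq_norm_sq]
  have e1 : dist A B ^ 2 = dist B C ^ 2 := by rw [h1]
  have e2 : dist B C ^ 2 = dist C A ^ 2 := by rw [h2]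
  have hp : 0 < dist A B ^ 2 := by positivity
  have hAB' := real_inner_comm A B
  rw [sq, sq] at e1 e2
  rw [sq] at hp
  simp only [hC, inner_sub_left, inner_sub_right, inner_neg_left, inner_neg_right, hAB'] at e1 e2 hp
  have hBB : ⟪B, B⟫ = r := by linarith
  have hAB : ⟪A, B⟫ = -r / 2 := by linarith
  have hr0 : 0 < r := by linarith
  have hBA : ⟪B, A⟫ = -r / 2 := by linarith
  have hdet : A 0 * B 1 - A 1 * B 0 ≠ 0 := by
    intro h0
    have a1 := hr
    have a2 := hBB
    have a3 := hAB
    simp only [PiLp.inner_apply, Fin.sum_univ_two, RCLike.inner_apply, conj_trivial] at a1 a2 a3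
    have : (A 0 * B 1 - A 1 * B 0) ^ 2 = r * r - (-r / 2) ^ 2 := by
      rw [← a3]; nth_rewrite 2 [← a2]; rw [a1]; ring
    rw [h0] at this
    nlinarith
  refine ⟨_, _, _, isFacetTriple_convexHull (P := (-2 / r) • A) (Q := (-2 / r) • B)
    (R := (-2 / r) • C) hcent ?_ ?_ ?_ ?_ fun x => ?_⟩
  · simp only [hC, real_inner_smul_left, inner_sub_right, inner_neg_right, ← hr, hAB]
    refine ⟨?_, ?_, ?_⟩ <;> field_simp <;> ring
  · simp only [hC, real_inner_smul_left, inner_sub_right, inner_neg_right, hBB, hBA]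
    refine ⟨?_, ?_, ?_⟩ <;> field_simp <;> ring
  · simp only [hC, real_inner_smul_left, inner_sub_right, inner_neg_right, inner_sub_left,
      inner_neg_left, ← hr, hAB, hBB, hBA]
    refine ⟨?_, ?_, ?_⟩ <;> field_simp <;> ring
  · rw [← smul_add, ← smul_add, hcent, smul_zero]
  · refine eq_of_inner_eq_of_det_ne_zero hdet ?_ ?_ <;>
      simp only [hC, real_inner_smul_left, real_inner_smul_right, inner_add_right, inner_sub_right,
        inner_neg_right, inner_sub_left, inner_neg_left, ← hr, hAB, hBB, hBA] <;>
      field_simp <;> ring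

/-- For an equilateral triangle `K` centered at the origin in the plane,
`ξ_{K°}(K − K) = 3 ξ_{K°}(K)`; in particular the Rogers–Shepard type inequality
`ξ_T(K−K) ≤ (n+1) ξ_T(K)` is sharp in the plane. -/
theorem xi_diff_equilateral_triangle (A B C : EuclideanSpace ℝ (Fin 2))
    (hpos : 0 < dist A B) (h1 : dist A B = dist B C) (h2 : dist B C = dist C A)
    (hcent : A + B + C = 0)
    (K : Set (EuclideanSpace ℝ (Fin 2))) (hK : K = convexHull ℝ {A, B, C}) :
    xi (polarBody K) (K - K) = 3 * xi (polarBody K) K := by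
  obtain ⟨f, g, h, H⟩ := exists_isFacetTriple_of_equilateral hpos h1 h2 hcent
  rw [hK, H.xi_eq_three, H.xi_sub_eq_nine]
  norm_num
end

section
/- For every convex body K ⊂ ℝ², ξ_B(K − K) ≤ (4/√3)·ξ_B(K), where B is the Euclidean unit disk, and the constant 4/√3 is sharp (equality is approached by an equilateral triangle). -/
open scoped RealInnerProductSpace Pointwise
open MeasureTheory

theorem inner_lt_of_mem_interior {E : Type*} [NormedAddCommGroup E] [InnerProductSpace ℝ E]
    {S : Set E} {n x : E} {c : ℝ} (hn : n ≠ 0) (hS : ∀ y ∈ S, ⟪n, y⟫ ≤ c)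
    (hx : x ∈ interior S) : ⟪n, x⟫ < c := by
  have hcont : Filter.Tendsto (fun τ : ℝ => x + τ • n) (nhdsWithin 0 (Set.Ioi 0)) (nhds x) := by
    have : Continuous (fun τ : ℝ => x + τ • n) := by fun_prop
    simpa using (this.tendsto 0).mono_left nhdsWithin_le_nhds
  have hmem := hcont.eventually (isOpen_interior.mem_nhds hx)
  obtain ⟨τ, hτ, hpos⟩ := (hmem.and self_mem_nhdsWithin).exists
  have h := hS _ (interior_subset hτ)
  rw [inner_add_right, real_inner_smul_right] at h
  have : 0 < τ * ⟪n, n⟫ := mul_pos hpos (real_inner_self_pos.2 hn)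
  linarith

/-- The weighted variance of finitely many points, in terms of pairwise distances. -/
theorem weighted_variance_eq {E ι : Type*} [NormedAddCommGroup E] [InnerProductSpace ℝ E]
    [Fintype ι] (w : ι → ℝ) (x : ι → E) (hw : ∑ i, w i = 1) :
    2 * (∑ i, w i * ‖x i‖ ^ 2 - ‖∑ i, w i • x i‖ ^ 2) =
      ∑ i, ∑ j, w i * w j * ‖x i - x j‖ ^ 2 := by
  have h (i j : ι) : w i * w j * ‖x i - x j‖ ^ 2 =
      w j * (w i * ‖x i‖ ^ 2) + w i * (w j * ‖x j‖ ^ 2) - 2 * ⟪w i • x i, w j • x j⟫ := by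
    rw [norm_sub_sq_real, real_inner_smul_left, real_inner_smul_right]; ring
  simp_rw [h, Finset.sum_sub_distrib, Finset.sum_add_distrib, ← Finset.mul_sum, ← Finset.sum_mul,
    hw, ← inner_sum, ← Finset.mul_sum, ← sum_inner, real_inner_self_eq_norm_sq]
  ring

/-- Jung's theorem for at most three points. -/
theorem exists_center_of_card_le_three {E ι : Type*} [NormedAddCommGroup E]
    [InnerProductSpace ℝ E] [Fintype ι] (hcard : Fintype.card ι ≤ 3) (x : ι → E) (d : ℝ)
    (hd : ∀ i j, ‖x i - x j‖ ≤ d) : ∃ c, ∀ i, ‖x i - c‖ ≤ d / √3 := by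
  classical
  rcases isEmpty_or_nonempty ι with hι | ⟨⟨i₀⟩⟩
  · exact ⟨0, fun i => hι.elim i⟩
  have hd0 : 0 ≤ d := (norm_nonneg _).trans (hd i₀ i₀)
  let F : (ι → ℝ) → ℝ := fun w => ∑ i, w i * ‖x i‖ ^ 2 - ‖∑ i, w i • x i‖ ^ 2
  have hF : Continuous F := by fun_prop
  obtain ⟨w, hw, hmax⟩ := (isCompact_stdSimplex ℝ ι).exists_isMaxOn
    ⟨_, single_mem_stdSimplex ℝ i₀⟩ hF.continuousOn
  have hbound : F w ≤ d ^ 2 / 3 := by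
    have h1 : 2 * F w ≤ ∑ i, ∑ j, w i * w j * d ^ 2 - ∑ i, w i * w i * d ^ 2 := by
      rw [weighted_variance_eq w x hw.2, ← Finset.sum_sub_distrib]
      refine Finset.sum_le_sum fun i _ => ?_
      rw [← Finset.sum_erase_add _ _ (Finset.mem_univ i),
        ← Finset.sum_erase_add (f := fun j => w i * w j * d ^ 2) _ (Finset.mem_univ i)]
      have : ∑ j ∈ Finset.univ.erase i, w i * w j * ‖x i - x j‖ ^ 2 ≤
          ∑ j ∈ Finset.univ.erase i, w i * w j * d ^ 2 := by
        refine Finset.sum_le_sum fun j _ => ?_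
        have := mul_nonneg (hw.1 i) (hw.1 j)
        gcongr
        exact hd i j
      simpa using this
    have h2 : (∑ i, w i) ^ 2 ≤ Fintype.card ι * ∑ i, w i ^ 2 := sq_sum_le_card_mul_sum_sq
    have h3 : ∑ i, ∑ j, w i * w j * d ^ 2 = d ^ 2 := by
      simp_rw [← Finset.sum_mul, ← Finset.mul_sum, ← Finset.sum_mul, hw.2]; ring
    have h4 : ∑ i, w i * w i * d ^ 2 = (∑ i, w i ^ 2) * d ^ 2 := by
      rw [Finset.sum_mul]; exact Finset.sum_congr rfl fun i _ => by ring
    have h5 : (0 : ℝ) ≤ ∑ i, w i ^ 2 := by positivity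
    have h6 : (Fintype.card ι : ℝ) ≤ 3 := by exact_mod_cast hcard
    rw [hw.2] at h2
    have h7 : (1 : ℝ) / 3 ≤ ∑ i, w i ^ 2 := by nlinarith
    have h8 := mul_le_mul_of_nonneg_right h7 (sq_nonneg d)
    linarith
  refine ⟨∑ i, w i • x i, fun i => ?_⟩
  set c := ∑ i, w i • x i with hc
  have hpert (t : ℝ) (ht0 : 0 < t) (ht1 : t ≤ 1) : (1 - t) * ‖x i - c‖ ^ 2 ≤ F w := by
    have hmem : (1 - t) • w + t • Pi.single i 1 ∈ stdSimplex ℝ ι :=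
      convex_stdSimplex ℝ ι hw (single_mem_stdSimplex ℝ i) (by linarith) ht0.le (by ring)
    have h : F ((1 - t) • w + t • Pi.single i 1) ≤ F w := hmax hmem
    have hFt : F ((1 - t) • w + t • Pi.single i 1) =
        (1 - t) * F w + t * ((1 - t) * ‖x i - c‖ ^ 2) := by
      have e1 : ∑ j, ((1 - t) • w + t • (Pi.single i 1 : ι → ℝ)) j • x j = (1 - t) • c + t • x i := by
        simp [add_smul, Finset.sum_add_distrib, mul_smul, ← Finset.smul_sum, hc, Pi.single_apply]
      have e2 : ∑ j, ((1 - t) • w + t • (Pi.single i 1 : ι → ℝ)) j * ‖x j‖ ^ 2 =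
          (1 - t) * ∑ j, w j * ‖x j‖ ^ 2 + t * ‖x i‖ ^ 2 := by
        simp [add_mul, Finset.sum_add_distrib, mul_assoc, ← Finset.mul_sum, Pi.single_apply]
      simp only [F, e1, e2, ← hc]
      rw [norm_add_sq_real, norm_sub_sq_real, norm_smul, norm_smul, real_inner_smul_left,
        real_inner_smul_right, real_inner_comm c (x i), mul_pow, mul_pow, Real.norm_eq_abs,
        Real.norm_eq_abs, sq_abs, sq_abs]
      ring
    rw [hFt] at h
    nlinarith
  have hlim : ‖x i - c‖ ^ 2 ≤ F w := by
    have ht : Filter.Tendsto (fun t : ℝ => (1 - t) * ‖x i - c‖ ^ 2) (nhdsWithin 0 (Set.Ioi 0))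
        (nhds (‖x i - c‖ ^ 2)) := by
      have : Continuous (fun t : ℝ => (1 - t) * ‖x i - c‖ ^ 2) := by fun_prop
      simpa using (this.tendsto 0).mono_left nhdsWithin_le_nhds
    refine le_of_tendsto ht ?_
    filter_upwards [Ioc_mem_nhdsGT (zero_lt_one' ℝ)] with t ht using hpert t ht.1 ht.2
  refine abs_le_of_sq_le_sq' ?_ (by positivity) |>.2
  rw [div_pow, Real.sq_sqrt (by norm_num)]
  exact hlim.trans hbound

/-- Jung's theorem in the plane. -/
theorem exists_center_of_norm_sub_le {E ι : Type*} [NormedAddCommGroup E]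
    [InnerProductSpace ℝ E] [FiniteDimensional ℝ E] (hE : Module.finrank ℝ E ≤ 2)
    (s : Finset ι) (x : ι → E) (d : ℝ)
    (hd : ∀ i ∈ s, ∀ j ∈ s, ‖x i - x j‖ ≤ d) : ∃ c, ∀ i ∈ s, ‖x i - c‖ ≤ d / √3 := by
  have h := Convex.helly_theorem' (𝕜 := ℝ) (s := s)
    (F := fun i => Metric.closedBall (x i) (d / √3))
    (fun i _ => convex_closedBall _ _) fun I hI hcard => by
      obtain ⟨c, hc⟩ := exists_center_of_card_le_three (ι := I)
        (by simpa using hcard.trans (by lia)) (fun i => x i) d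
        fun i j => hd i (hI i.2) j (hI j.2)
      refine ⟨c, Set.mem_iInter₂.2 fun i hi => ?_⟩
      rw [Metric.mem_closedBall, dist_eq_norm, norm_sub_rev]
      exact hc ⟨i, hi⟩
  obtain ⟨c, hc⟩ := h
  refine ⟨c, fun i hi => ?_⟩
  have := Set.mem_iInter₂.1 hc i hi
  rwa [Metric.mem_closedBall, dist_eq_norm, norm_sub_rev] at this

/-- The lengths of closed polygonal lines that cannot be translated into the interior of `K`. -/
def closedLengths {n : ℕ} (K : Set (EuclideanSpace ℝ (Fin n))) : Set ℝ :=
  {ℓ : ℝ | ∃ m : ℕ, 2 ≤ m ∧ ∃ q : ℕ → EuclideanSpace ℝ (Fin n),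
    NotTranslatableInto m q K ∧
    ℓ = ∑ i ∈ Finset.range m, ‖q ((i + 1) % m) - q i‖}

theorem xiB_le_of_mem {n : ℕ} {K : Set (EuclideanSpace ℝ (Fin n))} {ℓ : ℝ}
    (h : ℓ ∈ closedLengths K) : xiB K ≤ ℓ := by
  refine csInf_le ⟨0, ?_⟩ h
  rintro _ ⟨m, -, q, -, rfl⟩
  positivity

/-- A segment at least as long as the breadth of `S` in its own direction cannot be translated
into the interior of `S`. -/
theorem two_mul_breadth_mem_closedLengths {n : ℕ} {S : Set (EuclideanSpace ℝ (Fin n))}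
    {u : EuclideanSpace ℝ (Fin n)} (hu : ‖u‖ = 1) {a b : ℝ} (hab : a ≤ b)
    (ha : ∀ x ∈ S, a ≤ ⟪u, x⟫) (hb : ∀ x ∈ S, ⟪u, x⟫ ≤ b) :
    2 * (b - a) ∈ closedLengths S := by
  have hu0 : u ≠ 0 := by rintro rfl; simp at hu
  refine ⟨2, le_rfl, fun i => if i = 0 then 0 else (b - a) • u, fun t => ?_, ?_⟩
  · by_contra! h
    have h0 : 0 + t ∈ interior S := by simpa using h 0 (by norm_num)
    have h1 : (b - a) • u + t ∈ interior S := by simpa using h 1 (by norm_num)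
    have e0 := inner_lt_of_mem_interior (neg_ne_zero.2 hu0)
      (fun y hy => by rw [inner_neg_left]; exact neg_le_neg (ha y hy)) h0
    have e1 := inner_lt_of_mem_interior hu0 hb h1
    rw [zero_add, inner_neg_left] at e0
    rw [inner_add_right, real_inner_smul_right, real_inner_self_eq_norm_sq, hu] at e1
    linarith
  · simp [Finset.sum_range_succ, norm_smul, hu, abs_of_nonneg (sub_nonneg.2 hab)]
    ring

theorem closedLengths_nonempty {n : ℕ} [NeZero n] {S : Set (EuclideanSpace ℝ (Fin n))}
    (hS : Bornology.IsBounded S) : (closedLengths S).Nonempty := by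
  obtain ⟨R, hR⟩ := hS.exists_norm_le
  have hu : ‖EuclideanSpace.single (0 : Fin n) (1 : ℝ)‖ = 1 := by simp
  have key (x) (hx : x ∈ S) : |⟪EuclideanSpace.single (0 : Fin n) (1 : ℝ), x⟫| ≤ |R| := by
    refine (abs_real_inner_le_norm _ _).trans ?_
    rw [hu, one_mul]
    exact (hR x hx).trans (le_abs_self R)
  exact ⟨_, two_mul_breadth_mem_closedLengths hu (neg_le_self (abs_nonneg R))
    (fun x hx => (abs_le.1 (key x hx)).1) (fun x hx => (abs_le.1 (key x hx)).2)⟩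

/-- `ξ_B(K - K)` is at most four times the breadth of `K` in any direction; here `h` is the
support function of `K`. -/
theorem xiB_sub_mul_norm_le {n : ℕ} {K : Set (EuclideanSpace ℝ (Fin n))} (hK : K.Nonempty)
    {h : EuclideanSpace ℝ (Fin n) → ℝ} (hh : ∀ p, ∀ y ∈ K, ⟪p, y⟫ ≤ h p)
    (v : EuclideanSpace ℝ (Fin n)) : xiB (K - K) * ‖v‖ ≤ 4 * (h v + h (-v)) := by
  obtain ⟨z, hz⟩ := hK
  have hnonneg : 0 ≤ h v + h (-v) := by
    have h1 := hh v z hz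
    have h2 := hh (-v) z hz
    rw [inner_neg_left] at h2
    linarith
  rcases eq_or_ne v 0 with rfl | hv
  · simpa using hnonneg
  have hv' : 0 < ‖v‖ := norm_pos_iff.2 hv
  set W := (h v + h (-v)) / ‖v‖ with hW
  have hW0 : 0 ≤ W := by positivity
  have hb (x) (hx : x ∈ K - K) : ⟪v, x⟫ ≤ h v + h (-v) := by
    obtain ⟨y, hy, y', hy', rfl⟩ := hx
    have h1 := hh v y hy
    have h2 := hh (-v) y' hy'
    rw [inner_neg_left] at h2
    rw [inner_sub_right]
    linarith
  have hb' (x) (hx : x ∈ K - K) : ⟪‖v‖⁻¹ • v, x⟫ ≤ W := by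
    rw [real_inner_smul_left, hW, div_eq_inv_mul]
    exact mul_le_mul_of_nonneg_left (hb x hx) (by positivity)
  have hmem := two_mul_breadth_mem_closedLengths (S := K - K) (u := ‖v‖⁻¹ • v) (a := -W) (b := W)
    (by rw [norm_smul, norm_inv, norm_norm, inv_mul_cancel₀ hv'.ne']) (by linarith)
    (fun x hx => by
      have := hb' (-x) (by
        obtain ⟨y, hy, y', hy', rfl⟩ := hx
        exact ⟨y', hy', y, hy, by simp⟩)
      rw [inner_neg_right] at this
      linarith) hb'
  have hle := mul_le_mul_of_nonneg_right (xiB_le_of_mem hmem) hv'.le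
  have : W * ‖v‖ = h v + h (-v) := div_mul_cancel₀ _ hv'.ne'
  linear_combination hle + 4 * this

/-- Duality: points that cannot be simultaneously translated into the interior of `K` come with
outer normals summing to zero. -/
theorem exists_normals_of_notTranslatable {E : Type*} [NormedAddCommGroup E]
    [InnerProductSpace ℝ E] [CompleteSpace E] {K : Set E} (hconv : Convex ℝ K)
    (hint : (interior K).Nonempty) {ι : Type*} [Fintype ι] (q : ι → E)
    (hq : ∀ t, ∃ i, q i + t ∉ interior K) :
    ∃ p : ι → E, p ≠ 0 ∧ ∑ i, p i = 0 ∧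
      ∀ x : ι → E, (∀ i, x i ∈ K) → ∑ i, ⟪p i, x i⟫ ≤ ∑ i, ⟪p i, q i⟫ := by
  classical
  let U : Set (ι → E) := Set.univ.pi fun _ => interior K
  let V : Set (ι → E) := Set.range fun t : E => q + fun _ => t
  have hV : Convex ℝ V := by
    rintro _ ⟨s, rfl⟩ _ ⟨t, rfl⟩ a b ha hb hab
    refine ⟨a • s + b • t, funext fun i => ?_⟩
    simp only [Pi.add_apply, Pi.smul_apply, smul_add]
    have : q i = a • q i + b • q i := by rw [← add_smul, hab, one_smul]
    nth_rewrite 1 [this]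
    abel
  have hdisj : Disjoint U V := by
    rw [Set.disjoint_right]
    rintro _ ⟨t, rfl⟩ hU
    obtain ⟨i, hi⟩ := hq t
    exact hi (hU i trivial)
  obtain ⟨f, u, hfU, hfV⟩ := geometric_hahn_banach_open
    (convex_pi fun i _ => hconv.interior) (isOpen_set_pi Set.finite_univ fun i _ => isOpen_interior)
    hV hdisj
  let p : ι → E := fun i =>
    (InnerProductSpace.toDual ℝ E).symm (f.comp (ContinuousLinearMap.single ℝ (fun _ => E) i))
  have hf (x : ι → E) : f x = ∑ i, ⟪p i, x i⟫ := by
    simp only [p, InnerProductSpace.toDual_symm_apply, ContinuousLinearMap.comp_apply]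
    rw [← map_sum]
    congr 1
    exact (Finset.univ_sum_single x).symm
  have hfq : u ≤ f q := hfV _ ⟨0, by ext; simp⟩
  refine ⟨p, ?_, ?_, fun x hx => ?_⟩
  · intro hp
    obtain ⟨z, hz⟩ := hint
    have h1 := hfU (fun _ => z) fun i _ => hz
    rw [hf] at h1 hfq
    simp only [hp, Pi.zero_apply, inner_zero_left, Finset.sum_const_zero] at h1 hfq
    linarith
  · set s := ∑ i, p i with hs
    by_contra hne
    have hpos : 0 < ⟪s, s⟫ := real_inner_self_pos.2 hne
    have h1 := hfV _ ⟨((u - f q - 1) / ⟪s, s⟫) • s, rfl⟩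
    have h2 : f (fun _ => ((u - f q - 1) / ⟪s, s⟫) • s) = u - f q - 1 := by
      rw [hf, ← sum_inner, ← hs, real_inner_smul_right, div_mul_cancel₀ _ hpos.ne']
    rw [map_add, h2] at h1
    linarith
  · rw [← hf, ← hf]
    have hcl : x ∈ closure U := by
      rw [closure_pi_set]
      intro i _
      rw [hconv.closure_interior_eq_closure_of_nonempty_interior hint]
      exact subset_closure (hx i)
    refine le_trans ?_ hfq
    exact closure_minimal (fun a ha => (hfU a ha).le)
      (isClosed_le f.continuous continuous_const) hcl

/-- Summation by parts around a closed polygonal line. -/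
theorem sum_inner_sub_le_mul_length {E : Type*} [NormedAddCommGroup E] [InnerProductSpace ℝ E]
    (m : ℕ) (N a : ℕ → E) (hN : N m = N 0) (ha : a m = a 0) {r : ℝ}
    (hr : ∀ i ≤ m, ‖N i‖ ≤ r) :
    ∑ i ∈ Finset.range m, ⟪N (i + 1) - N i, a i⟫ ≤
      r * ∑ i ∈ Finset.range m, ‖a (i + 1) - a i‖ := by
  have htel := Finset.sum_range_sub (fun i => ⟪N i, a i⟫) m
  rw [hN, ha, sub_self] at htel
  rw [← sub_zero (∑ i ∈ Finset.range m, ⟪N (i + 1) - N i, a i⟫), ← htel,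
    ← Finset.sum_sub_distrib, Finset.mul_sum]
  refine Finset.sum_le_sum fun i hi => ?_
  calc ⟪N (i + 1) - N i, a i⟫ - (⟪N (i + 1), a (i + 1)⟫ - ⟪N i, a i⟫)
      = -⟪N (i + 1), a (i + 1) - a i⟫ := by rw [inner_sub_left, inner_sub_right]; ring
    _ ≤ ‖N (i + 1)‖ * ‖a (i + 1) - a i‖ :=
        (neg_le_abs _).trans (abs_real_inner_le_norm _ _)
    _ ≤ r * ‖a (i + 1) - a i‖ :=
        mul_le_mul_of_nonneg_right (hr _ (Finset.mem_range.1 hi)) (norm_nonneg _)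

theorem xiB_sub_self_le {K : Set (EuclideanSpace ℝ (Fin 2))} (hK : IsConvexBody K) :
    xiB (K - K) ≤ (4 / √3) * xiB K := by
  obtain ⟨hcomp, hconv, hint⟩ := hK
  have hKne : K.Nonempty := hint.mono interior_subset
  have h3 : 0 < √3 := by positivity
  rw [← div_le_iff₀' (by positivity)]
  refine le_csInf (closedLengths_nonempty hcomp.isBounded) ?_
  rintro _ ⟨m, hm, q, hq, rfl⟩
  have hmax (p : EuclideanSpace ℝ (Fin 2)) : ∃ x ∈ K, ∀ y ∈ K, ⟪p, y⟫ ≤ ⟪p, x⟫ := by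
    obtain ⟨x, hxK, hx⟩ := hcomp.exists_isMaxOn hKne (f := fun y => ⟪p, y⟫) (by fun_prop)
    exact ⟨x, hxK, fun y hy => hx hy⟩
  choose x hxK hx using hmax
  obtain ⟨p', hp'0, hp'sum, hp'⟩ := exists_normals_of_notTranslatable hconv hint
    (fun i : Fin m => q i) fun t => by
      obtain ⟨i, hi, h⟩ := hq t
      exact ⟨⟨i, hi⟩, h⟩
  let p : ℕ → EuclideanSpace ℝ (Fin 2) := fun i => if h : i < m then p' ⟨i, h⟩ else 0
  have hpp (i : Fin m) : p i = p' i := by simp [p]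
  have hpsum : ∑ i ∈ Finset.range m, p i = 0 := by
    rw [← Fin.sum_univ_eq_sum_range p, ← hp'sum]
    exact Finset.sum_congr rfl fun i _ => hpp i
  let h : EuclideanSpace ℝ (Fin 2) → ℝ := fun v => ⟪v, x v⟫
  have hsupp : ∑ i ∈ Finset.range m, h (p i) ≤ ∑ i ∈ Finset.range m, ⟪p i, q i⟫ := by
    rw [← Fin.sum_univ_eq_sum_range (fun i => h (p i)),
      ← Fin.sum_univ_eq_sum_range (fun i => ⟪p i, q i⟫)]
    simp only [hpp]
    exact hp' (fun i => x (p' i)) fun i => hxK _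
  have hsub (s : Finset ℕ) : h (∑ i ∈ s, p i) ≤ ∑ i ∈ s, h (p i) := by
    change ⟪∑ i ∈ s, p i, x (∑ i ∈ s, p i)⟫ ≤ _
    rw [sum_inner]
    exact Finset.sum_le_sum fun i _ => hx _ _ (hxK _)
  let P : ℕ → EuclideanSpace ℝ (Fin 2) := fun k => ∑ i ∈ Finset.range k, p i
  have hdiam {i j : ℕ} (hij : i ≤ j) (hj : j ≤ m) :
      xiB (K - K) * ‖P j - P i‖ ≤ 4 * ∑ i ∈ Finset.range m, h (p i) := by
    have e1 : P j - P i = ∑ k ∈ Finset.Ico i j, p k := (Finset.sum_Ico_eq_sub p hij).symm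
    have hsubset : Finset.Ico i j ⊆ Finset.range m := fun k hk => by
      rw [Finset.mem_Ico] at hk; rw [Finset.mem_range]; lia
    have e2 : -(P j - P i) = ∑ k ∈ Finset.range m \ Finset.Ico i j, p k := by
      rw [e1, ← sub_eq_zero, neg_sub_left, neg_eq_zero, Finset.sum_sdiff hsubset, hpsum]
    have e3 := hsub (Finset.Ico i j)
    have e4 := hsub (Finset.range m \ Finset.Ico i j)
    have e5 := Finset.sum_sdiff hsubset (f := fun i => h (p i))
    rw [← e1] at e3
    rw [← e2] at e4
    have e6 := xiB_sub_mul_norm_le hKne hx (P j - P i)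
    change _ ≤ 4 * (h (P j - P i) + h (-(P j - P i))) at e6
    linarith
  obtain ⟨⟨i₀, j₀⟩, hmem, hd⟩ :=
    (Finset.range (m + 1) ×ˢ Finset.range (m + 1)).exists_max_image
      (fun ij => ‖P ij.1 - P ij.2‖) ⟨(0, 0), by simp⟩
  set d := ‖P i₀ - P j₀‖ with hd_def
  simp only [Finset.mem_product, Finset.mem_range, Nat.lt_succ_iff] at hmem
  have hd' (i) (hi : i ≤ m) (j) (hj : j ≤ m) : ‖P i - P j‖ ≤ d :=
    hd (i, j) (by simp only [Finset.mem_product, Finset.mem_range]; lia)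
  have hdpos : 0 < d := by
    by_contra! hd0
    apply hp'0
    ext1 i
    have h1 := hd' (i + 1) i.2 i i.2.le
    have h2 : P (i + 1) - P i = p i := by simp [P, Finset.sum_range_succ]
    rw [h2, hpp] at h1
    exact norm_le_zero_iff.1 (h1.trans hd0)
  obtain ⟨c, hc⟩ := exists_center_of_norm_sub_le (by simp) (Finset.range (m + 1)) P d
    fun i hi j hj => hd' i (Nat.lt_succ_iff.1 (Finset.mem_range.1 hi)) j
      (Nat.lt_succ_iff.1 (Finset.mem_range.1 hj))
  have hparts := sum_inner_sub_le_mul_length m (fun k => P k - c) (fun k => q (k % m))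
    (by simp only [P, hpsum, Finset.sum_range_zero]) (by simp)
    (fun i hi => hc i (Finset.mem_range.2 (Nat.lt_succ_iff.2 hi)))
  have hmain : xiB (K - K) * d ≤ 4 * ∑ i ∈ Finset.range m, h (p i) := by
    rcases le_total i₀ j₀ with hij | hij
    · rw [hd_def, norm_sub_rev]; exact hdiam hij hmem.2
    · exact hdiam hij hmem.1
  have hleft : ∑ i ∈ Finset.range m, ⟪P (i + 1) - c - (P i - c), q (i % m)⟫ =
      ∑ i ∈ Finset.range m, ⟪p i, q i⟫ := by
    refine Finset.sum_congr rfl fun i hi => ?_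
    rw [Nat.mod_eq_of_lt (Finset.mem_range.1 hi), sub_sub_sub_cancel_right]
    simp [P, Finset.sum_range_succ]
  have hright : ∑ i ∈ Finset.range m, ‖q ((i + 1) % m) - q (i % m)‖ =
      ∑ i ∈ Finset.range m, ‖q ((i + 1) % m) - q i‖ :=
    Finset.sum_congr rfl fun i hi => by rw [Nat.mod_eq_of_lt (Finset.mem_range.1 hi)]
  rw [hleft, hright] at hparts
  rw [div_le_iff₀' (by positivity)]
  refine le_of_mul_le_mul_right ?_ hdpos
  calc xiB (K - K) * d ≤ 4 * ∑ i ∈ Finset.range m, h (p i) := hmain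
    _ ≤ 4 * (d / √3 * ∑ i ∈ Finset.range m, ‖q ((i + 1) % m) - q i‖) := by linarith
    _ = _ := by ring

/-- A closed polygonal line of length `L` lies in a ball of radius `L / 4`. -/
theorem exists_center_of_closed_polygon {E : Type*} [NormedAddCommGroup E] [NormedSpace ℝ E]
    (m : ℕ) (a : ℕ → E) (ha : a m = a 0) :
    ∃ c, ∀ i ≤ m, dist (a i) c ≤ (∑ k ∈ Finset.range m, dist (a k) (a (k + 1))) / 4 := by
  classical
  let s : ℕ → ℝ := fun k => ∑ k ∈ Finset.range k, dist (a k) (a (k + 1))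
  have hs0 : s 0 = 0 := by simp [s]
  have hs {i j : ℕ} (hij : i ≤ j) : dist (a i) (a j) ≤ s j - s i := by
    have := dist_le_Ico_sum_dist a hij
    rwa [Finset.sum_Ico_eq_sub _ hij] at this
  have hmono {i j : ℕ} (hij : i ≤ j) : s i ≤ s j := sub_nonneg.1 (dist_nonneg.trans (hs hij))
  set L := ∑ k ∈ Finset.range m, dist (a k) (a (k + 1)) with hL
  have hsm : s m = L := rfl
  have hL0 : 0 ≤ L := by positivity
  have hex : ∃ k, L / 2 ≤ s k := ⟨m, by rw [hsm]; linarith⟩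
  have hkm : Nat.find hex ≤ m := Nat.find_le (by rw [hsm]; linarith)
  have hk := Nat.find_spec hex
  rcases hkeq : Nat.find hex with _ | j
  · rw [hkeq, hs0] at hk
    refine ⟨a 0, fun i hi => ?_⟩
    have h1 := hs (Nat.zero_le i)
    have h2 := hmono hi
    rw [dist_comm]
    linarith
  · have hj : s j < L / 2 := not_le.1 (Nat.find_min hex (by lia))
    rw [hkeq] at hk hkm
    have hstep : dist (a j) (a (j + 1)) = s (j + 1) - s j := by simp [s, Finset.sum_range_succ]
    have hpos : 0 < s (j + 1) - s j := by linarith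
    set θ := (L / 2 - s j) / (s (j + 1) - s j) with hθ
    have hθ0 : 0 ≤ θ := div_nonneg (by linarith) hpos.le
    have hθ1 : θ ≤ 1 := (div_le_one hpos).2 (by linarith)
    have hθmul : θ * (s (j + 1) - s j) = L / 2 - s j := div_mul_cancel₀ _ hpos.ne'
    set y := AffineMap.lineMap (a j) (a (j + 1)) θ with hy
    have hy1 : dist (a j) y = L / 2 - s j := by
      rw [hy, dist_left_lineMap, Real.norm_of_nonneg hθ0, hstep, hθmul]
    have hy2 : dist (a (j + 1)) y = s (j + 1) - L / 2 := by
      rw [hy, dist_comm, dist_lineMap_right, Real.norm_of_nonneg (by linarith), hstep]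
      linarith
    refine ⟨midpoint ℝ (a 0) y, fun i hi => ?_⟩
    have hmid : dist (a i) (midpoint ℝ (a 0) y) ≤ (dist (a i) (a 0) + dist (a i) y) / 2 := by
      simpa using dist_midpoint_midpoint_le (a i) (a i) (a 0) y
    refine hmid.trans ?_
    rcases le_or_gt i j with hij | hij
    · have h1 := hs (Nat.zero_le i)
      have h2 := hs hij
      have h3 := dist_triangle (a i) (a j) y
      rw [dist_comm] at h1
      linarith
    · have h1 := hs hi
      have h2 := hs (Nat.succ_le_of_lt hij)
      have h3 := dist_triangle (a i) (a (j + 1)) y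
      rw [dist_comm] at h2
      rw [ha] at h1
      linarith

theorem four_mul_le_xiB_of_ball_subset {n : ℕ} [NeZero n] {S : Set (EuclideanSpace ℝ (Fin n))}
    (hS : Bornology.IsBounded S) {r : ℝ} (hr : Metric.ball 0 r ⊆ S) : 4 * r ≤ xiB S := by
  refine le_csInf (closedLengths_nonempty hS) ?_
  rintro _ ⟨m, hm, q, hq, rfl⟩
  by_contra! hlt
  obtain ⟨c, hc⟩ := exists_center_of_closed_polygon m (fun k => q (k % m)) (by simp)
  have hlen : ∑ i ∈ Finset.range m, dist (q (i % m)) (q ((i + 1) % m)) =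
      ∑ i ∈ Finset.range m, ‖q ((i + 1) % m) - q i‖ :=
    Finset.sum_congr rfl fun i hi => by
      rw [Nat.mod_eq_of_lt (Finset.mem_range.1 hi), dist_comm, dist_eq_norm]
  obtain ⟨i, hi, hnot⟩ := hq (-c)
  refine hnot (interior_maximal hr Metric.isOpen_ball ?_)
  have h := hc i hi.le
  rw [hlen, Nat.mod_eq_of_lt hi, dist_eq_norm] at h
  rw [mem_ball_zero_iff, ← sub_eq_add_neg]
  linarith

/-- The edges of an equilateral triangle form a tight frame of the plane. -/
theorem equilateral_frame {u v w : EuclideanSpace ℝ (Fin 2)} {s : ℝ} (hs : 0 < s)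
    (hv : ‖v‖ = s) (hw : ‖w‖ = s) (hvw : ‖v + w‖ = s) :
    3 / 4 * s ^ 2 * ‖u‖ ^ 2 = ⟪u, v⟫ ^ 2 + ⟪u, v⟫ * ⟪u, w⟫ + ⟪u, w⟫ ^ 2 := by
  have e1 : ‖v‖ ^ 2 = s ^ 2 := by rw [hv]
  have e2 : ‖w‖ ^ 2 = s ^ 2 := by rw [hw]
  have e3 : ‖v + w‖ ^ 2 = s ^ 2 := by rw [hvw]
  refine mul_left_cancel₀ (pow_ne_zero 2 hs.ne') ?_
  simp only [EuclideanSpace.real_norm_sq_eq, PiLp.inner_apply, Fin.sum_univ_two, PiLp.add_apply,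
    RCLike.inner_apply, conj_trivial] at *
  have e4 : v 0 * w 0 + v 1 * w 1 = -s ^ 2 / 2 := by linarith
  have gram : (u 0 ^ 2 + u 1 ^ 2) * ((v 0 ^ 2 + v 1 ^ 2) * (w 0 ^ 2 + w 1 ^ 2)
      - (v 0 * w 0 + v 1 * w 1) ^ 2) =
      (w 0 ^ 2 + w 1 ^ 2) * (v 0 * u 0 + v 1 * u 1) ^ 2
      - 2 * (v 0 * w 0 + v 1 * w 1) * ((v 0 * u 0 + v 1 * u 1) * (w 0 * u 0 + w 1 * u 1))
      + (v 0 ^ 2 + v 1 ^ 2) * (w 0 * u 0 + w 1 * u 1) ^ 2 := by ring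
  rw [e1, e2, e4] at gram
  linear_combination gram

theorem isCompact_sub {E : Type*} [NormedAddCommGroup E] {S T : Set E} (hS : IsCompact S)
    (hT : IsCompact T) : IsCompact (S - T) := by
  rw [sub_eq_add_neg]
  exact hS.add hT.neg

theorem ball_subset_equilateral_sub {A B C : EuclideanSpace ℝ (Fin 2)} {s : ℝ} (hs : 0 < s)
    (hAB : ‖B - A‖ = s) (hBC : ‖C - B‖ = s) (hCA : ‖C - A‖ = s) :
    Metric.ball 0 (√3 / 2 * s) ⊆ convexHull ℝ {A, B, C} - convexHull ℝ {A, B, C} := by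
  set T := convexHull ℝ {A, B, C} with hT
  have hTconv : Convex ℝ T := convex_convexHull ℝ _
  have hTcomp : IsCompact T := (Set.toFinite _).isCompact_convexHull ℝ
  have hsub : ({A, B, C} : Set _) ⊆ T := subset_convexHull ℝ _
  have hA : A ∈ T := hsub (by simp)
  have hB : B ∈ T := hsub (by simp)
  have hC : C ∈ T := hsub (by simp)
  intro x hx
  by_contra hxT
  obtain ⟨f, c, hf, hfx⟩ := geometric_hahn_banach_closed_point (hTconv.sub hTconv)
    (isCompact_sub hTcomp hTcomp).isClosed hxT
  set u := (InnerProductSpace.toDual ℝ _).symm f with hu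
  have hfu (y) : f y = ⟪u, y⟫ := by rw [hu, InnerProductSpace.toDual_symm_apply]
  have hc {y z : EuclideanSpace ℝ (Fin 2)} (hy : y ∈ T) (hz : z ∈ T) : ⟪u, y - z⟫ ^ 2 < c ^ 2 := by
    have h1 := hf _ ⟨y, hy, z, hz, rfl⟩
    have h2 := hf _ ⟨z, hz, y, hy, rfl⟩
    simp only [hfu] at h1 h2
    rw [← neg_sub y z, inner_neg_right] at h2
    exact sq_lt_sq' (by linarith) h1
  have hcpos : 0 ≤ c := by
    have := hf _ ⟨A, hA, A, hA, rfl⟩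
    simp only [sub_self, map_zero] at this
    exact this.le
  have e1 := hc hB hA
  have e2 := hc hC hB
  have e3 := hc hC hA
  have hsum : C - A = (B - A) + (C - B) := by abel
  have hframe := equilateral_frame (u := u) hs hAB hBC (by rw [← hsum, hCA])
  rw [hsum, inner_add_right] at e3
  have hlt : 3 / 4 * s ^ 2 * ‖u‖ ^ 2 < c ^ 2 := by
    rw [hframe]
    generalize ⟪u, B - A⟫ = a at *
    generalize ⟪u, C - B⟫ = b at *
    rcases le_total 0 (a * b) with h | h
    · nlinarith
    · rcases le_total (a ^ 2) (b ^ 2) with h' | h'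
      · have : a ^ 2 ≤ -(a * b) := by
          rw [← abs_of_nonpos h, abs_mul, ← sq_abs, sq]
          exact mul_le_mul_of_nonneg_left (sq_le_sq.1 h') (abs_nonneg a)
        linarith
      · have : b ^ 2 ≤ -(a * b) := by
          rw [← abs_of_nonpos h, abs_mul, ← sq_abs, sq]
          exact mul_le_mul_of_nonneg_right (sq_le_sq.1 h') (abs_nonneg b)
        linarith
  have hle : c ≤ √3 / 2 * s * ‖u‖ := by
    rw [hfu] at hfx
    refine hfx.le.trans ((real_inner_le_norm u x).trans ?_)
    rw [mul_comm]
    exact mul_le_mul_of_nonneg_right (mem_ball_zero_iff.1 hx).le (norm_nonneg u)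
  have hsq := pow_le_pow_left₀ hcpos hle 2
  rw [mul_pow, mul_pow, div_pow, Real.sq_sqrt (by norm_num)] at hsq
  linarith

theorem isConvexBody_equilateral {A B C : EuclideanSpace ℝ (Fin 2)} {s : ℝ} (hs : 0 < s)
    (hAB : ‖B - A‖ = s) (hBC : ‖C - B‖ = s) (hCA : ‖C - A‖ = s) :
    IsConvexBody (convexHull ℝ {A, B, C}) := by
  have hconv : Convex ℝ (convexHull ℝ {A, B, C}) := convex_convexHull ℝ _
  refine ⟨(Set.toFinite _).isCompact_convexHull ℝ, hconv, ?_⟩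
  have hA : A ∈ convexHull ℝ {A, B, C} := subset_convexHull ℝ _ (by simp)
  rw [hconv.interior_nonempty_iff_affineSpan_eq_top,
    ← AffineSubspace.direction_eq_top_iff_of_nonempty ⟨A, mem_affineSpan ℝ hA⟩,
    direction_affineSpan]
  refine Submodule.eq_top_of_nonempty_interior' _ ⟨0, mem_interior.2
    ⟨Metric.ball 0 (√3 / 2 * s), fun x hx => ?_, Metric.isOpen_ball,
      Metric.mem_ball_self (by positivity)⟩⟩
  obtain ⟨y, hy, z, hz, rfl⟩ := ball_subset_equilateral_sub hs hAB hBC hCA hx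
  exact vsub_mem_vectorSpan ℝ hy hz

theorem xiB_equilateral_le {A B C : EuclideanSpace ℝ (Fin 2)} {s : ℝ} (hs : 0 < s)
    (hAB : ‖B - A‖ = s) (hBC : ‖C - B‖ = s) (hCA : ‖C - A‖ = s) :
    xiB (convexHull ℝ {A, B, C}) ≤ 3 / 2 * s := by
  have side {X Y Z : EuclideanSpace ℝ (Fin 2)} (hXY : ‖Y - X‖ = s) (hYZ : ‖Z - Y‖ = s)
      (hZX : ‖Z - X‖ = s) : Y + Z - (2 : ℝ) • X ≠ 0 ∧
        ∀ x ∈ convexHull ℝ {X, Y, Z},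
          ⟪Y + Z - (2 : ℝ) • X, x⟫ ≤ ⟪Y + Z - (2 : ℝ) • X, (1 / 2 : ℝ) • (Y + Z)⟫ := by
    have e1 : ‖Y - X‖ ^ 2 = s ^ 2 := by rw [hXY]
    have e2 : ‖Z - Y‖ ^ 2 = s ^ 2 := by rw [hYZ]
    have e3 : ‖Z - X‖ ^ 2 = s ^ 2 := by rw [hZX]
    have hs2 : 0 < s ^ 2 := by positivity
    simp only [EuclideanSpace.real_norm_sq_eq, Fin.sum_univ_two, PiLp.sub_apply] at e1 e2 e3
    constructor
    · intro h
      have h0 := congrArg (fun z => z 0) h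
      have h1 := congrArg (fun z => z 1) h
      simp only [PiLp.sub_apply, PiLp.add_apply, PiLp.smul_apply, smul_eq_mul,
        PiLp.zero_apply] at h0 h1
      have k0 : Z 0 = 2 * X 0 - Y 0 := by linarith
      have k1 : Z 1 = 2 * X 1 - Y 1 := by linarith
      rw [k0, k1] at e2
      nlinarith
    · refine convexHull_min ?_ (convex_halfSpace_le (innerₛₗ ℝ (Y + Z - (2 : ℝ) • X)).isLinear _)
      intro x hx
      change ⟪Y + Z - (2 : ℝ) • X, x⟫ ≤ _
      rcases hx with rfl | rfl | rfl <;>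
        simp only [PiLp.inner_apply, Fin.sum_univ_two, PiLp.add_apply, PiLp.sub_apply,
          PiLp.smul_apply, smul_eq_mul, RCLike.inner_apply, conj_trivial] <;> nlinarith
  refine xiB_le_of_mem ⟨3, by norm_num, fun i => if i = 0 then (1 / 2 : ℝ) • (B + C) else
    if i = 1 then (1 / 2 : ℝ) • (C + A) else (1 / 2 : ℝ) • (A + B), fun t => ?_, ?_⟩
  · by_contra! h
    have h0 : (1 / 2 : ℝ) • (B + C) + t ∈ interior (convexHull ℝ {A, B, C}) := by
      simpa using h 0 (by norm_num)
    have h1 : (1 / 2 : ℝ) • (C + A) + t ∈ interior (convexHull ℝ {A, B, C}) := by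
      simpa using h 1 (by norm_num)
    have h2 : (1 / 2 : ℝ) • (A + B) + t ∈ interior (convexHull ℝ {A, B, C}) := by
      simpa using h 2 (by norm_num)
    have rotB : ({A, B, C} : Set (EuclideanSpace ℝ (Fin 2))) = {B, C, A} := by
      ext; simp; tauto
    have rotC : ({A, B, C} : Set (EuclideanSpace ℝ (Fin 2))) = {C, A, B} := by
      ext; simp; tauto
    obtain ⟨nA, sA⟩ := side hAB hBC hCA
    obtain ⟨nB, sB⟩ := side hBC (by rwa [norm_sub_rev]) (by rwa [norm_sub_rev])
    obtain ⟨nC, sC⟩ := side (X := C) (Y := A) (Z := B) (by rwa [norm_sub_rev]) hAB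
      (by rwa [norm_sub_rev])
    rw [← rotB] at sB
    rw [← rotC] at sC
    have i0 := inner_lt_of_mem_interior nA sA h0
    have i1 := inner_lt_of_mem_interior nB sB h1
    have i2 := inner_lt_of_mem_interior nC sC h2
    rw [inner_add_right] at i0 i1 i2
    have hzero : ⟪B + C - (2 : ℝ) • A, t⟫ + ⟪C + A - (2 : ℝ) • B, t⟫ +
        ⟪A + B - (2 : ℝ) • C, t⟫ = 0 := by
      rw [← inner_add_left, ← inner_add_left, ← inner_zero_left (𝕜 := ℝ) t]
      congr 1
      module
    linarith
  · have e0 : (1 / 2 : ℝ) • (C + A) - (1 / 2 : ℝ) • (B + C) = (1 / 2 : ℝ) • (A - B) := by module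
    have e1 : (1 / 2 : ℝ) • (A + B) - (1 / 2 : ℝ) • (C + A) = (1 / 2 : ℝ) • (B - C) := by module
    have e2 : (1 / 2 : ℝ) • (B + C) - (1 / 2 : ℝ) • (A + B) = (1 / 2 : ℝ) • (C - A) := by module
    rw [norm_sub_rev] at hAB hBC
    simp only [Finset.sum_range_succ, Finset.sum_range_zero, Nat.reduceAdd, Nat.reduceMod,
      one_ne_zero, OfNat.ofNat_ne_zero, OfNat.ofNat_ne_one, if_true, if_false, e0, e1, e2, norm_smul,
      hAB, hBC, hCA]
    norm_num
    ring

/-- Euclidean Rogers–Shepard type inequality: `ξ_B(K−K) ≤ (4/√3) ξ_B(K)` for planar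
convex bodies, with equality for equilateral triangles (sharpness). -/
theorem xiB_diff_le_and_sharp :
    (∀ K : Set (EuclideanSpace ℝ (Fin 2)), IsConvexBody K →
      xiB (K - K) ≤ (4 / Real.sqrt 3) * xiB K) ∧
    (∀ A B C : EuclideanSpace ℝ (Fin 2), 0 < dist A B → dist A B = dist B C →
      dist B C = dist C A →
      xiB (convexHull ℝ {A, B, C} - convexHull ℝ {A, B, C}) =
        (4 / Real.sqrt 3) * xiB (convexHull ℝ {A, B, C})) := by
  refine ⟨fun K hK => xiB_sub_self_le hK, fun A B C hpos hABC hBCA => ?_⟩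
  have hAB : ‖B - A‖ = dist A B := by rw [dist_comm, dist_eq_norm]
  have hBC : ‖C - B‖ = dist A B := by rw [hABC, dist_comm, dist_eq_norm]
  have hCA : ‖C - A‖ = dist A B := by rw [hABC, hBCA, dist_eq_norm]
  have hbody := isConvexBody_equilateral hpos hAB hBC hCA
  refine le_antisymm (xiB_sub_self_le hbody) ?_
  refine le_trans ?_ (four_mul_le_xiB_of_ball_subset (isCompact_sub hbody.1 hbody.1).isBounded
    (ball_subset_equilateral_sub hpos hAB hBC hCA))
  refine (mul_le_mul_of_nonneg_left (xiB_equilateral_le hpos hAB hBC hCA)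
    (by positivity)).trans_eq ?_
  have h3 : √3 * √3 = 3 := Real.mul_self_sqrt (by norm_num)
  field_simp
  linarith
end

section
/- For every triangle Δ ⊂ ℝ² (a nondegenerate triangle regarded as a convex body), ξ_B(Δ) ≥ √3 · w_B(Δ). More precisely, if the trajectory realizing ξ_B(Δ) is the 3-periodic one with vertices at the feet of the altitudes of Δ, its length equals twice the semiperimeter of the orthic triangle and satisfies this bound, the width of Δ being the altitude from the vertex of maximal angle. -/
open scoped RealInnerProductSpace Pointwise
open MeasureTheory

/-- The planar cross product. -/
def cross (u v : EuclideanSpace ℝ (Fin 2)) : ℝ := u 0 * v 1 - u 1 * v 0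

/-- Twice the signed area of the triangle `A B C`. -/
def doubleArea (A B C : EuclideanSpace ℝ (Fin 2)) : ℝ := cross (B - A) (C - A)

lemma norm_sq_eq_coords (u : EuclideanSpace ℝ (Fin 2)) : ‖u‖ ^ 2 = u 0 ^ 2 + u 1 ^ 2 := by
  simp [EuclideanSpace.norm_sq_eq, Fin.sum_univ_two]

lemma inner_eq_coords (u v : EuclideanSpace ℝ (Fin 2)) : ⟪u, v⟫ = u 0 * v 0 + u 1 * v 1 := by
  simp [PiLp.inner_apply, Fin.sum_univ_two, mul_comm]

lemma abs_cross_le (u v : EuclideanSpace ℝ (Fin 2)) : |cross u v| ≤ ‖u‖ * ‖v‖ := by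
  apply abs_le_of_sq_le_sq _ (by positivity)
  rw [mul_pow, norm_sq_eq_coords, norm_sq_eq_coords, cross]
  nlinarith [sq_nonneg (u 0 * v 0 + u 1 * v 1)]

lemma doubleArea_swap (A B C : EuclideanSpace ℝ (Fin 2)) :
    doubleArea A C B = -doubleArea A B C := by
  simp only [doubleArea, cross, PiLp.sub_apply]; ring

lemma doubleArea_rotate (A B C : EuclideanSpace ℝ (Fin 2)) :
    doubleArea B C A = doubleArea A B C := by
  simp only [doubleArea, cross, PiLp.sub_apply]; ring

lemma doubleArea_ne_zero {A B C : EuclideanSpace ℝ (Fin 2)}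
    (h : AffineIndependent ℝ ![A, B, C]) : doubleArea A B C ≠ 0 := by
  intro h0
  rw [affineIndependent_iff_not_collinear_set] at h
  apply h
  by_cases hAB : B = A
  · subst hAB
    simpa using collinear_pair ℝ B C
  rw [collinear_iff_of_mem (p₀ := A) (by simp)]
  have hn : (B 0 - A 0) ^ 2 + (B 1 - A 1) ^ 2 ≠ 0 := by
    intro h1
    apply hAB
    ext i
    fin_cases i
    · simp only [Fin.zero_eta]
      nlinarith [sq_nonneg (B 0 - A 0), sq_nonneg (B 1 - A 1)]
    · simp only [Fin.mk_one]
      nlinarith [sq_nonneg (B 0 - A 0), sq_nonneg (B 1 - A 1)]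
  refine ⟨B - A, ?_⟩
  rintro p (rfl | rfl | rfl)
  · exact ⟨0, by simp⟩
  · exact ⟨1, by simp⟩
  · refine ⟨((p 0 - A 0) * (B 0 - A 0) + (p 1 - A 1) * (B 1 - A 1)) /
      ((B 0 - A 0) ^ 2 + (B 1 - A 1) ^ 2), ?_⟩
    simp only [doubleArea, cross, PiLp.sub_apply] at h0
    ext i
    fin_cases i
    · simp
      field_simp
      linear_combination (-(B 1 - A 1)) * h0
    · simp
      field_simp
      linear_combination (B 0 - A 0) * h0

section Jung

lemma le_add_of_lens {n V s e : ℝ} (hn : V ≤ n) (hs : V ≤ 2 * s) (he : 0 ≤ e)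
    (h : s ^ 2 + 3 * e ^ 2 = n * V) : V ≤ s + e := by
  by_contra! hV
  have h1 : 0 < (s - e) * (n - s - e) := mul_pos (by linarith) (by linarith)
  have h2 : 0 ≤ e * (n - 2 * e) := mul_nonneg he (by linarith)
  nlinarith

/-- Jung's theorem for a planar triangle with longest side `A B`. -/
lemma exists_center_of_longest {A B C : EuclideanSpace ℝ (Fin 2)}
    (hA : ‖C - A‖ ≤ ‖B - A‖) (hB : ‖C - B‖ ≤ ‖B - A‖) :
    ∃ O : EuclideanSpace ℝ (Fin 2), √3 * ‖A - O‖ ≤ ‖B - A‖ ∧ √3 * ‖B - O‖ ≤ ‖B - A‖ ∧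
      √3 * ‖C - O‖ ≤ ‖B - A‖ := by
  obtain ⟨t, e, he, ht, hte⟩ : ∃ t e : ℝ, 0 ≤ e ∧ 12 * t ^ 2 = 1 ∧
      2 * t * doubleArea A B C = e := by
    have h3 : √3 ^ 2 = 3 := Real.sq_sqrt (by norm_num)
    have ht : 12 * (√3 / 6) ^ 2 = 1 := by rw [div_pow, h3]; norm_num
    rcases le_total 0 (doubleArea A B C) with h | h
    · exact ⟨√3 / 6, _, by positivity, ht, rfl⟩
    · exact ⟨-(√3 / 6), _, mul_nonneg_of_nonpos_of_nonpos
        (by linarith [Real.sqrt_nonneg 3]) h, by rwa [neg_sq], rfl⟩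
  have key : ∀ v : EuclideanSpace ℝ (Fin 2), 3 * ‖v‖ ^ 2 ≤ ‖B - A‖ ^ 2 →
      √3 * ‖v‖ ≤ ‖B - A‖ := by
    intro v hv
    apply le_of_sq_le_sq _ (norm_nonneg _)
    rwa [mul_pow, Real.sq_sqrt (by norm_num)]
  have hA2 := pow_le_pow_left₀ (norm_nonneg _) hA 2
  have hB2 := pow_le_pow_left₀ (norm_nonneg _) hB 2
  simp only [norm_sq_eq_coords, PiLp.sub_apply] at hA2 hB2 key
  simp only [doubleArea, cross, PiLp.sub_apply] at hte
  refine ⟨!₂[(A 0 + B 0) / 2 - t * (B 1 - A 1), (A 1 + B 1) / 2 + t * (B 0 - A 0)],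
    key _ ?_, key _ ?_, key _ ?_⟩
  · simp
    apply le_of_eq
    linear_combination ((B 0 - A 0) ^ 2 + (B 1 - A 1) ^ 2) / 4 * ht
  · simp
    apply le_of_eq
    linear_combination ((B 0 - A 0) ^ 2 + (B 1 - A 1) ^ 2) / 4 * ht
  · have := le_add_of_lens (s := (B 0 - A 0) * (C 0 - A 0) + (B 1 - A 1) * (C 1 - A 1))
      hA2 (by linarith) he (by
        rw [← hte]
        linear_combination ((B 0 - A 0) * (C 1 - A 1) - (B 1 - A 1) * (C 0 - A 0)) ^ 2 * ht)
    simp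
    nlinarith

/-- Jung's theorem for a planar triangle: a center whose distance to the vertices is at most the
diameter divided by `√3`. -/
lemma exists_center {A B C : EuclideanSpace ℝ (Fin 2)} {c : ℝ}
    (hAB : ‖B - A‖ ≤ c) (hBC : ‖C - B‖ ≤ c) (hCA : ‖A - C‖ ≤ c) :
    ∃ O : EuclideanSpace ℝ (Fin 2), √3 * ‖A - O‖ ≤ c ∧ √3 * ‖B - O‖ ≤ c ∧
      √3 * ‖C - O‖ ≤ c := by
  have hCA' := norm_sub_rev A C
  have hAB' := norm_sub_rev A B
  have hBC' := norm_sub_rev B C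
  rcases le_total ‖B - A‖ ‖C - B‖ with h1 | h1
  · rcases le_total ‖C - B‖ ‖A - C‖ with h2 | h2
    · obtain ⟨O, h⟩ := exists_center_of_longest (A := C) (B := A) (C := B)
        (by linarith) (by linarith)
      exact ⟨O, by linarith, by linarith, by linarith⟩
    · obtain ⟨O, h⟩ := exists_center_of_longest (A := B) (B := C) (C := A)
        (by linarith) (by linarith)
      exact ⟨O, by linarith, by linarith, by linarith⟩
  · rcases le_total ‖B - A‖ ‖A - C‖ with h2 | h2
    · obtain ⟨O, h⟩ := exists_center_of_longest (A := C) (B := A) (C := B)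
        (by linarith) (by linarith)
      exact ⟨O, by linarith, by linarith, by linarith⟩
    · obtain ⟨O, h⟩ := exists_center_of_longest (A := A) (B := B) (C := C)
        (by linarith) (by linarith)
      exact ⟨O, by linarith, by linarith, by linarith⟩

end Jung

section Perimeter

variable {n : ℕ}

lemma perimeter_le_of_le {m i j k : ℕ} (q : ℕ → EuclideanSpace ℝ (Fin n))
    (hij : i ≤ j) (hjk : j ≤ k) (hk : k < m) :
    ‖q i - q j‖ + ‖q j - q k‖ + ‖q k - q i‖ ≤
      ∑ l ∈ Finset.range m, ‖q ((l + 1) % m) - q l‖ := by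
  let Q : ℕ → EuclideanSpace ℝ (Fin n) := fun l => q (l % m)
  have hQ : ∀ l < m, Q l = q l := fun l hl => by simp only [Q, Nat.mod_eq_of_lt hl]
  have hsum : ∑ l ∈ Finset.range m, ‖q ((l + 1) % m) - q l‖ =
      ∑ l ∈ Finset.Ico 0 m, dist (Q l) (Q (l + 1)) := by
    rw [Finset.range_eq_Ico]
    refine Finset.sum_congr rfl fun l hl => ?_
    rw [hQ l (Finset.mem_Ico.1 hl).2, dist_comm, dist_eq_norm]
  have h0 : Q m = Q 0 := by simp [Q]
  rw [hsum, ← Finset.sum_Ico_consecutive _ (Nat.zero_le i) (by omega : i ≤ m),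
    ← Finset.sum_Ico_consecutive _ hij (by omega : j ≤ m),
    ← Finset.sum_Ico_consecutive _ hjk (by omega : k ≤ m),
    ← hQ i (by omega), ← hQ j (by omega), ← hQ k hk]
  simp only [← dist_eq_norm]
  have h1 := dist_le_Ico_sum_dist Q (Nat.zero_le i)
  have h2 := dist_le_Ico_sum_dist Q hij
  have h3 := dist_le_Ico_sum_dist Q hjk
  have h4 := dist_le_Ico_sum_dist Q hk.le
  have h5 := dist_triangle (Q k) (Q m) (Q i)
  rw [h0] at h4 h5
  linarith

lemma perimeter_le {m i j k : ℕ} (q : ℕ → EuclideanSpace ℝ (Fin n))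
    (hi : i < m) (hj : j < m) (hk : k < m) :
    ‖q i - q j‖ + ‖q j - q k‖ + ‖q k - q i‖ ≤
      ∑ l ∈ Finset.range m, ‖q ((l + 1) % m) - q l‖ := by
  have h1 := norm_sub_rev (q i) (q j)
  have h2 := norm_sub_rev (q j) (q k)
  have h3 := norm_sub_rev (q k) (q i)
  rcases le_total i j with hij | hij <;> rcases le_total j k with hjk | hjk <;>
    rcases le_total i k with hik | hik
  · linarith [perimeter_le_of_le q hij hjk hk]
  · linarith [perimeter_le_of_le q hij hjk hk]
  · linarith [perimeter_le_of_le q hik hjk hj]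
  · linarith [perimeter_le_of_le q hik hij hj]
  · linarith [perimeter_le_of_le q hij hik hk]
  · linarith [perimeter_le_of_le q hjk hik hi]
  · linarith [perimeter_le_of_le q hjk hij hi]
  · linarith [perimeter_le_of_le q hjk hij hi]

end Perimeter

section Length

/-- Points with positive barycentric coordinates are interior to the triangle. -/
lemma mem_interior_triangle {A B C P : EuclideanSpace ℝ (Fin 2)}
    (hA : 0 < doubleArea P B C) (hB : 0 < doubleArea A P C) (hC : 0 < doubleArea A B P) :
    P ∈ interior (convexHull ℝ {A, B, C}) := by
  have hsub : {X | 0 < doubleArea X B C ∧ 0 < doubleArea A X C ∧ 0 < doubleArea A B X} ⊆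
      convexHull ℝ {A, B, C} := by
    rintro X ⟨h1, h2, h3⟩
    have hsum : doubleArea X B C + doubleArea A X C + doubleArea A B X = doubleArea A B C := by
      simp only [doubleArea, cross, PiLp.sub_apply]; ring
    have hD : 0 < doubleArea A B C := by linarith
    have hX : X = ∑ i, ![doubleArea X B C / doubleArea A B C, doubleArea A X C / doubleArea A B C,
        doubleArea A B X / doubleArea A B C] i • ![A, B, C] i := by
      ext i
      simp only [Fin.sum_univ_three, Matrix.cons_val_zero, Matrix.cons_val_one, Matrix.cons_val,
        PiLp.add_apply, PiLp.smul_apply, smul_eq_mul]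
      field_simp
      simp only [doubleArea, cross, PiLp.sub_apply]
      fin_cases i <;> simp only [Fin.zero_eta, Fin.mk_one] <;> ring
    rw [hX]
    refine (convex_convexHull ℝ _).sum_mem (fun i _ => ?_) ?_ (fun i _ => ?_)
    · fin_cases i <;> exact (div_pos ‹_› hD).le
    · simp only [Fin.sum_univ_three, Matrix.cons_val_zero, Matrix.cons_val_one, Matrix.cons_val]
      rw [← add_div, ← add_div, hsum, div_self hD.ne']
    · fin_cases i <;> exact subset_convexHull ℝ _ (by simp)
  have hcont : Continuous (fun X => doubleArea X B C) ∧ Continuous (fun X => doubleArea A X C) ∧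
      Continuous (fun X => doubleArea A B X) := by
    simp only [doubleArea, cross, PiLp.sub_apply]
    refine ⟨?_, ?_, ?_⟩ <;> fun_prop
  exact interior_maximal hsub ((isOpen_lt continuous_const hcont.1).inter
    ((isOpen_lt continuous_const hcont.2.1).inter (isOpen_lt continuous_const hcont.2.2)))
    ⟨hA, hB, hC⟩

lemma exists_doubleArea_sum_nonpos {A B C : EuclideanSpace ℝ (Fin 2)}
    (hD : 0 < doubleArea A B C) {m : ℕ} (hm : 0 < m) {q : ℕ → EuclideanSpace ℝ (Fin 2)}
    (hq : NotTranslatableInto m q (convexHull ℝ {A, B, C})) :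
    ∃ i < m, ∃ j < m, ∃ k < m,
      doubleArea (q i) B C + doubleArea A (q j) C + doubleArea A B (q k) ≤ 0 := by
  have hmin : ∀ f : EuclideanSpace ℝ (Fin 2) → ℝ, ∃ i < m, ∀ l < m, f (q i) ≤ f (q l) := by
    intro f
    obtain ⟨i, hi, h⟩ := Finset.exists_min_image (Finset.range m) (fun l => f (q l))
      ⟨0, Finset.mem_range.2 hm⟩
    exact ⟨i, Finset.mem_range.1 hi, fun l hl => h l (Finset.mem_range.2 hl)⟩
  obtain ⟨i, hi, hi'⟩ := hmin (fun P => doubleArea P B C)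
  obtain ⟨j, hj, hj'⟩ := hmin (fun P => doubleArea A P C)
  obtain ⟨k, hk, hk'⟩ := hmin (fun P => doubleArea A B P)
  refine ⟨i, hi, j, hj, k, hk, ?_⟩
  by_contra! hpos
  set a := doubleArea (q i) B C
  set b := doubleArea A (q j) C
  set c := doubleArea A B (q k)
  set d := (a + b + c) / 3 with hd
  -- the translation for which the three minimal barycentric coordinates become equal
  obtain ⟨t, h1, h2⟩ : ∃ t : EuclideanSpace ℝ (Fin 2),
      cross (C - B) t = d - a ∧ cross (A - C) t = d - b := by
    refine ⟨(1 / doubleArea A B C) • ((d - a) • (A - C) + (d - b) • (B - C)), ?_, ?_⟩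
    all_goals
      have hD' := hD.ne'
      simp only [cross, PiLp.smul_apply, PiLp.add_apply, PiLp.sub_apply, smul_eq_mul]
      field_simp
      simp only [doubleArea, cross, PiLp.sub_apply]
      ring
  obtain ⟨l, hl, hout⟩ := hq t
  apply hout
  have e1 : doubleArea (q l + t) B C = doubleArea (q l) B C + cross (C - B) t := by
    simp only [doubleArea, cross, PiLp.sub_apply, PiLp.add_apply]; ring
  have e2 : doubleArea A (q l + t) C = doubleArea A (q l) C + cross (A - C) t := by
    simp only [doubleArea, cross, PiLp.sub_apply, PiLp.add_apply]; ring
  have e3 : doubleArea A B (q l + t) =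
      doubleArea A B (q l) - cross (C - B) t - cross (A - C) t := by
    simp only [doubleArea, cross, PiLp.sub_apply, PiLp.add_apply]; ring
  have := hi' l hl
  have := hj' l hl
  have := hk' l hl
  apply mem_interior_triangle <;> linarith

lemma doubleArea_le_length {A B C : EuclideanSpace ℝ (Fin 2)} {c : ℝ}
    (hD : 0 < doubleArea A B C)
    (hAB : ‖B - A‖ ≤ c) (hBC : ‖C - B‖ ≤ c) (hCA : ‖A - C‖ ≤ c)
    {m : ℕ} (hm : 0 < m) {q : ℕ → EuclideanSpace ℝ (Fin 2)}
    (hq : NotTranslatableInto m q (convexHull ℝ {A, B, C})) :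
    √3 * doubleArea A B C ≤ c * ∑ l ∈ Finset.range m, ‖q ((l + 1) % m) - q l‖ := by
  obtain ⟨i, hi, j, hj, k, hk, h⟩ := exists_doubleArea_sum_nonpos hD hm hq
  obtain ⟨O, hOA, hOB, hOC⟩ := exists_center hAB hBC hCA
  have hc : 0 ≤ c := (norm_nonneg _).trans hAB
  have hper := mul_le_mul_of_nonneg_left (perimeter_le q hi hj hk) hc
  have hid : doubleArea (q i) B C + doubleArea A (q j) C + doubleArea A B (q k) =
      doubleArea A B C - cross (A - O) (q k - q j) - cross (B - O) (q i - q k) -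
        cross (C - O) (q j - q i) := by
    simp only [doubleArea, cross, PiLp.sub_apply]; ring
  have key : ∀ {u v : EuclideanSpace ℝ (Fin 2)}, √3 * ‖u‖ ≤ c →
      √3 * cross u v ≤ c * ‖v‖ := fun {u v} hu =>
    calc √3 * cross u v ≤ √3 * (‖u‖ * ‖v‖) := by
          gcongr; exact (le_abs_self _).trans (abs_cross_le u v)
      _ = √3 * ‖u‖ * ‖v‖ := by ring
      _ ≤ c * ‖v‖ := by gcongr
  have h1 := key (v := q k - q j) hOA
  have h2 := key (v := q i - q k) hOB
  have h3 := key (v := q j - q i) hOC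
  rw [norm_sub_rev] at h1 h2 h3
  have h4 := mul_nonpos_of_nonneg_of_nonpos (Real.sqrt_nonneg 3) h
  rw [hid] at h4
  linarith

lemma abs_doubleArea_le_length {A B C : EuclideanSpace ℝ (Fin 2)} {c : ℝ}
    (hD : doubleArea A B C ≠ 0)
    (hAB : ‖B - A‖ ≤ c) (hBC : ‖C - B‖ ≤ c) (hCA : ‖A - C‖ ≤ c)
    {m : ℕ} (hm : 0 < m) {q : ℕ → EuclideanSpace ℝ (Fin 2)}
    (hq : NotTranslatableInto m q (convexHull ℝ {A, B, C})) :
    √3 * |doubleArea A B C| ≤ c * ∑ l ∈ Finset.range m, ‖q ((l + 1) % m) - q l‖ := by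
  rcases hD.lt_or_gt with h | h
  · rw [abs_of_neg h, ← doubleArea_swap]
    rw [Set.pair_comm] at hq
    rw [norm_sub_rev] at hAB hBC hCA
    exact doubleArea_le_length (by rw [doubleArea_swap]; linarith) hCA hBC hAB hm hq
  · rw [abs_of_pos h]
    exact doubleArea_le_length h hAB hBC hCA hm hq

lemma exists_notTranslatableInto {K : Set (EuclideanSpace ℝ (Fin 2))}
    (hK : Bornology.IsBounded K) :
    ∃ q : ℕ → EuclideanSpace ℝ (Fin 2), NotTranslatableInto 2 q K := by
  obtain ⟨R, hR⟩ := Metric.isBounded_iff.1 hK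
  obtain ⟨v, hv⟩ := NormedSpace.exists_lt_norm ℝ (EuclideanSpace ℝ (Fin 2)) R
  refine ⟨fun l => if l = 0 then 0 else v, fun t => ?_⟩
  by_contra! h
  have h0 := interior_subset (h 0 (by norm_num))
  have h1 := interior_subset (h 1 (by norm_num))
  have := hR h1 h0
  simp [dist_eq_norm] at this
  linarith

end Length

section Width

variable {n : ℕ}

lemma isCompact_triangle (A B C : EuclideanSpace ℝ (Fin n)) :
    IsCompact (convexHull ℝ {A, B, C}) :=
  (Set.toFinite _).isCompact_convexHull ℝ

lemma isCompact_inner_image {K : Set (EuclideanSpace ℝ (Fin n))} (hK : IsCompact K)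
    (p : EuclideanSpace ℝ (Fin n)) : IsCompact ((fun q => ⟪p, q⟫) '' K) :=
  hK.image (by fun_prop)

lemma inner_sub_inner_le_breadth {K : Set (EuclideanSpace ℝ (Fin n))} (hK : IsCompact K)
    (p : EuclideanSpace ℝ (Fin n)) {x y : EuclideanSpace ℝ (Fin n)} (hx : x ∈ K) (hy : y ∈ K) :
    ⟪p, x⟫ - ⟪p, y⟫ ≤ sSup ((fun q => ⟪p, q⟫) '' K) - sInf ((fun q => ⟪p, q⟫) '' K) := by
  have hc := isCompact_inner_image hK p
  have h1 := le_csSup hc.bddAbove (Set.mem_image_of_mem _ hx)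
  have h2 := csInf_le hc.bddBelow (Set.mem_image_of_mem _ hy)
  linarith

lemma widthB_le {K : Set (EuclideanSpace ℝ (Fin n))} (hK : IsCompact K) (hne : K.Nonempty)
    {p : EuclideanSpace ℝ (Fin n)} (hp : ‖p‖ = 1) {l u : ℝ}
    (hl : ∀ x ∈ K, l ≤ ⟪p, x⟫) (hu : ∀ x ∈ K, ⟪p, x⟫ ≤ u) : widthB K ≤ u - l := by
  obtain ⟨x, hx⟩ := hne
  have hb : BddBelow {w : ℝ | ∃ p : EuclideanSpace ℝ (Fin n), ‖p‖ = 1 ∧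
      w = sSup ((fun q => ⟪p, q⟫) '' K) - sInf ((fun q => ⟪p, q⟫) '' K)} := by
    refine ⟨0, ?_⟩
    rintro _ ⟨p, -, rfl⟩
    simpa using inner_sub_inner_le_breadth hK p hx hx
  refine (csInf_le hb ⟨p, hp, rfl⟩).trans (sub_le_sub ?_ ?_)
  · refine csSup_le ⟨_, x, hx, rfl⟩ ?_
    rintro _ ⟨y, hy, rfl⟩
    exact hu y hy
  · refine le_csInf ⟨_, x, hx, rfl⟩ ?_
    rintro _ ⟨y, hy, rfl⟩
    exact hl y hy

lemma inner_mem_Icc_of_mem_triangle {A B C p : EuclideanSpace ℝ (Fin n)} {l u : ℝ}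
    (hA : ⟪p, A⟫ ∈ Set.Icc l u) (hB : ⟪p, B⟫ ∈ Set.Icc l u) (hC : ⟪p, C⟫ ∈ Set.Icc l u) :
    ∀ x ∈ convexHull ℝ {A, B, C}, ⟪p, x⟫ ∈ Set.Icc l u := by
  refine convexHull_min (t := {x | ⟪p, x⟫ ∈ Set.Icc l u}) ?_ ?_
  · rintro x (rfl | rfl | rfl) <;> assumption
  · exact (convex_Icc l u).is_linear_preimage (f := fun x => ⟪p, x⟫)
      ⟨inner_add_right p, fun c x => by simp [inner_smul_right]⟩

lemma widthB_mul_side_le (A B C : EuclideanSpace ℝ (Fin 2)) (hBC : B ≠ C) :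
    widthB (convexHull ℝ {A, B, C}) * ‖C - B‖ ≤ |doubleArea A B C| := by
  have hc : 0 < ‖C - B‖ := norm_pos_iff.2 (sub_ne_zero.2 hBC.symm)
  have hsq := norm_sq_eq_coords (C - B)
  simp only [PiLp.sub_apply] at hsq
  set c := ‖C - B‖
  let p : EuclideanSpace ℝ (Fin 2) := !₂[(B 1 - C 1) / c, (C 0 - B 0) / c]
  have hp : ‖p‖ = 1 := by
    have : ‖p‖ ^ 2 = 1 ^ 2 := by
      rw [norm_sq_eq_coords]
      simp only [p, Matrix.cons_val_zero, Matrix.cons_val_one]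
      field_simp
      linarith
    exact (pow_left_inj₀ (norm_nonneg _) zero_le_one two_ne_zero).1 this
  have hCB : ⟪p, C⟫ = ⟪p, B⟫ := by
    simp only [inner_eq_coords, p, Matrix.cons_val_zero, Matrix.cons_val_one]
    ring
  have hA : (⟪p, A⟫ - ⟪p, B⟫) * c = doubleArea A B C := by
    simp only [inner_eq_coords, p, Matrix.cons_val_zero, Matrix.cons_val_one,
      doubleArea, cross, PiLp.sub_apply]
    field_simp
    ring
  have hmem := inner_mem_Icc_of_mem_triangle (A := A) (B := B) (C := C) (p := p)
    (l := min ⟪p, A⟫ ⟪p, B⟫) (u := max ⟪p, A⟫ ⟪p, B⟫) (by simp) (by simp) (by simp [hCB])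
  have hw := widthB_le (isCompact_triangle A B C) ⟨A, subset_convexHull ℝ _ (by simp)⟩ hp
    (fun x hx => (hmem x hx).1) (fun x hx => (hmem x hx).2)
  rw [max_sub_min_eq_abs] at hw
  rw [← hA, abs_mul, abs_of_pos hc, abs_sub_comm]
  exact mul_le_mul_of_nonneg_right hw hc.le

lemma abs_doubleArea_le_of_inner_le {X M Y p : EuclideanSpace ℝ (Fin 2)} {c : ℝ}
    (hp : ‖p‖ = 1) (hX : ‖X - M‖ ≤ c) (hY : ‖Y - M‖ ≤ c)
    (h1 : ⟪p, Y⟫ ≤ ⟪p, M⟫) (h2 : ⟪p, M⟫ ≤ ⟪p, X⟫) :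
    |doubleArea M X Y| ≤ c * (⟪p, X⟫ - ⟪p, Y⟫) := by
  have hsq := norm_sq_eq_coords p
  have hid : |doubleArea M X Y| =
      ‖(⟪p, X⟫ - ⟪p, M⟫) • (Y - M) + (⟪p, M⟫ - ⟪p, Y⟫) • (X - M)‖ := by
    rw [← abs_norm (_ + _), ← sq_eq_sq_iff_abs_eq_abs, norm_sq_eq_coords]
    rw [hp] at hsq
    simp only [inner_eq_coords, doubleArea, cross, PiLp.sub_apply, PiLp.add_apply,
      PiLp.smul_apply, smul_eq_mul]
    linear_combination ((X 0 - M 0) * (Y 1 - M 1) - (X 1 - M 1) * (Y 0 - M 0)) ^ 2 * hsq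
  rw [hid]
  refine (norm_add_le _ _).trans ?_
  rw [norm_smul, norm_smul, Real.norm_of_nonneg (sub_nonneg.2 h2),
    Real.norm_of_nonneg (sub_nonneg.2 h1)]
  nlinarith [mul_le_mul_of_nonneg_left hY (sub_nonneg.2 h2),
    mul_le_mul_of_nonneg_left hX (sub_nonneg.2 h1)]

lemma abs_doubleArea_div_le_widthB {A B C : EuclideanSpace ℝ (Fin 2)} {c : ℝ} (hc : 0 < c)
    (hAB : ‖B - A‖ ≤ c) (hBC : ‖C - B‖ ≤ c) (hCA : ‖A - C‖ ≤ c) :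
    |doubleArea A B C| / c ≤ widthB (convexHull ℝ {A, B, C}) := by
  refine le_csInf ?_ ?_
  · obtain ⟨p, hp⟩ := exists_norm_eq (EuclideanSpace ℝ (Fin 2)) zero_le_one
    exact ⟨_, p, hp, rfl⟩
  rintro _ ⟨p, hp, rfl⟩
  rw [div_le_iff₀' hc]
  have hAB' := hAB
  have hBC' := hBC
  have hCA' := hCA
  rw [norm_sub_rev] at hAB' hBC' hCA'
  have hb : ∀ {x y : EuclideanSpace ℝ (Fin 2)}, x ∈ ({A, B, C} : Set _) →
      y ∈ ({A, B, C} : Set _) → |doubleArea A B C| ≤ c * (⟪p, x⟫ - ⟪p, y⟫) →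
      |doubleArea A B C| ≤ c * (sSup ((fun q => ⟪p, q⟫) '' convexHull ℝ {A, B, C}) -
        sInf ((fun q => ⟪p, q⟫) '' convexHull ℝ {A, B, C})) := fun hx hy h =>
    h.trans (mul_le_mul_of_nonneg_left (inner_sub_inner_le_breadth (isCompact_triangle A B C) p
      (subset_convexHull ℝ _ hx) (subset_convexHull ℝ _ hy)) hc.le)
  have hB := doubleArea_rotate A B C
  have hC := (doubleArea_rotate B C A).trans hB
  have hA' : |doubleArea A C B| = |doubleArea A B C| := by rw [doubleArea_swap, abs_neg]
  have hB' : |doubleArea B A C| = |doubleArea A B C| := by rw [doubleArea_swap, abs_neg, hB]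
  have hC' : |doubleArea C B A| = |doubleArea A B C| := by rw [doubleArea_swap, abs_neg, hC]
  rcases le_total ⟪p, A⟫ ⟪p, B⟫ with h1 | h1 <;> rcases le_total ⟪p, B⟫ ⟪p, C⟫ with h2 | h2 <;>
    rcases le_total ⟪p, A⟫ ⟪p, C⟫ with h3 | h3
  · exact hb (x := C) (y := A) (by simp) (by simp)
      (hB ▸ abs_doubleArea_le_of_inner_le hp hBC hAB' h1 h2)
  · exact hb (x := C) (y := A) (by simp) (by simp)
      (hB ▸ abs_doubleArea_le_of_inner_le hp hBC hAB' h1 h2)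
  · exact hb (x := B) (y := A) (by simp) (by simp)
      (hC' ▸ abs_doubleArea_le_of_inner_le hp hBC' hCA h3 h2)
  · exact hb (x := B) (y := C) (by simp) (by simp)
      (abs_doubleArea_le_of_inner_le hp hAB hCA' h3 h1)
  · exact hb (x := C) (y := B) (by simp) (by simp)
      (hA' ▸ abs_doubleArea_le_of_inner_le hp hCA' hAB h1 h3)
  · exact hb (x := A) (y := B) (by simp) (by simp)
      (hC ▸ abs_doubleArea_le_of_inner_le hp hCA hBC' h2 h3)
  · exact hb (x := A) (y := C) (by simp) (by simp)
      (hB' ▸ abs_doubleArea_le_of_inner_le hp hAB' hBC h2 h1)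
  · exact hb (x := A) (y := C) (by simp) (by simp)
      (hB' ▸ abs_doubleArea_le_of_inner_le hp hAB' hBC h2 h1)

end Width

/-- The altitude from `A` is twice the area divided by the length of the opposite side. -/
lemma infDist_affineSpan_pair (A : EuclideanSpace ℝ (Fin 2)) {B C : EuclideanSpace ℝ (Fin 2)}
    (hBC : B ≠ C) :
    Metric.infDist A (affineSpan ℝ {B, C} : Set (EuclideanSpace ℝ (Fin 2))) =
      |doubleArea A B C| / ‖C - B‖ := by
  have hc : 0 < ‖C - B‖ := norm_pos_iff.2 (sub_ne_zero.2 hBC.symm)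
  apply le_antisymm
  · set r := ⟪C - B, A - B⟫ / ‖C - B‖ ^ 2 with hr
    refine (Metric.infDist_le_dist_of_mem
      (AffineMap.lineMap_mem_affineSpan_pair r B C)).trans (le_of_eq ?_)
    rw [eq_div_iff hc.ne', dist_eq_norm]
    have hr' : r * ‖C - B‖ ^ 2 = ⟪C - B, A - B⟫ := by rw [hr]; field_simp
    rw [← abs_of_nonneg (mul_nonneg (norm_nonneg (A - AffineMap.lineMap B C r)) hc.le),
      ← sq_eq_sq_iff_abs_eq_abs, mul_pow]
    rw [norm_sq_eq_coords] at hr' ⊢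
    rw [norm_sq_eq_coords]
    simp only [inner_eq_coords, PiLp.sub_apply] at hr'
    simp only [doubleArea, cross, AffineMap.lineMap_apply, vsub_eq_sub, vadd_eq_add,
      PiLp.sub_apply, PiLp.add_apply, PiLp.smul_apply, smul_eq_mul]
    linear_combination (r * ((C 0 - B 0) ^ 2 + (C 1 - B 1) ^ 2) -
      ((C 0 - B 0) * (A 0 - B 0) + (C 1 - B 1) * (A 1 - B 1))) * hr'
  · refine (Metric.le_infDist ⟨B, left_mem_affineSpan_pair ℝ B C⟩).2 fun y hy => ?_
    obtain ⟨r, hr⟩ := (vadd_left_mem_affineSpan_pair (k := ℝ) (p₁ := B) (p₂ := C)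
      (v := y - B)).1 (by simpa using hy)
    obtain rfl : y = AffineMap.lineMap B C r := by
      rw [AffineMap.lineMap_apply, hr, vadd_eq_add, sub_add_cancel]
    rw [div_le_iff₀ hc, dist_eq_norm]
    refine le_of_eq_of_le ?_ (abs_cross_le _ _)
    rw [← abs_neg]
    congr 1
    simp only [doubleArea, cross, AffineMap.lineMap_apply, vsub_eq_sub, vadd_eq_add,
      PiLp.sub_apply, PiLp.add_apply, PiLp.smul_apply, smul_eq_mul]
    ring

open EuclideanGeometry in
/-- For every nondegenerate triangle `Δ`, `ξ_B(Δ) ≥ √3 · w_B(Δ)`; moreover the width of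
`Δ` is the altitude from the vertex of maximal angle. -/
theorem xiB_triangle_ge_sqrt3_width (A B C : EuclideanSpace ℝ (Fin 2))
    (hnd : AffineIndependent ℝ ![A, B, C]) :
    Real.sqrt 3 * widthB (convexHull ℝ {A, B, C}) ≤ xiB (convexHull ℝ {A, B, C}) ∧
    (∠ A B C ≤ ∠ B A C → ∠ B C A ≤ ∠ B A C →
      widthB (convexHull ℝ {A, B, C}) =
        Metric.infDist A (affineSpan ℝ {B, C} : Set (EuclideanSpace ℝ (Fin 2)))) := by
  have hD := doubleArea_ne_zero hnd
  have hcol := affineIndependent_iff_not_collinear_set.1 hnd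
  have hinj := hnd.injective
  have hAB : A ≠ B := fun h => by simpa using @hinj 0 1 (by simpa using h)
  have hBC : B ≠ C := fun h => by simpa using @hinj 1 2 (by simpa using h)
  have hCA : C ≠ A := fun h => by simpa using @hinj 2 0 (by simpa using h)
  refine ⟨?_, fun hB hC => ?_⟩
  · obtain ⟨q₀, hq₀⟩ := exists_notTranslatableInto (isCompact_triangle A B C).isBounded
    refine le_csInf ⟨_, 2, le_rfl, q₀, hq₀, rfl⟩ ?_
    rintro _ ⟨m, hm, q, hq, rfl⟩
    have key : ∀ c, ‖B - A‖ ≤ c → ‖C - B‖ ≤ c → ‖A - C‖ ≤ c →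
        widthB (convexHull ℝ {A, B, C}) * c ≤ |doubleArea A B C| →
        √3 * widthB (convexHull ℝ {A, B, C}) ≤
          ∑ i ∈ Finset.range m, ‖q ((i + 1) % m) - q i‖ := by
      intro c h1 h2 h3 hw
      have hc : 0 < c := (norm_pos_iff.2 (sub_ne_zero.2 hAB.symm)).trans_le h1
      have hl := abs_doubleArea_le_length hD h1 h2 h3 (by omega) hq
      refine le_of_mul_le_mul_left ?_ hc
      linarith [mul_le_mul_of_nonneg_left hw (Real.sqrt_nonneg 3)]
    have hwBC := widthB_mul_side_le A B C hBC
    have hwCA := widthB_mul_side_le B C A hCA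
    have hwAB := widthB_mul_side_le C A B hAB
    rw [← doubleArea_rotate C A B, show ({C, A, B} : Set _) = {A, B, C} by
      rw [Set.insert_comm, Set.pair_comm]] at hwAB
    rw [doubleArea_rotate A B C, show ({B, C, A} : Set _) = {A, B, C} by
      rw [Set.pair_comm, Set.insert_comm]] at hwCA
    rcases le_total ‖B - A‖ ‖C - B‖ with h1 | h1
    · rcases le_total ‖C - B‖ ‖A - C‖ with h2 | h2
      · exact key _ (h1.trans h2) h2 le_rfl hwCA
      · exact key _ h1 le_rfl h2 hwBC
    · rcases le_total ‖B - A‖ ‖A - C‖ with h2 | h2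
      · exact key _ h2 (h1.trans h2) le_rfl hwCA
      · exact key _ le_rfl h1 h2 hwAB
  · have hc : 0 < ‖C - B‖ := norm_pos_iff.2 (sub_ne_zero.2 hBC.symm)
    have hCA' : ‖A - C‖ ≤ ‖C - B‖ := by
      rw [angle_comm A B C, angle_comm B A C, angle_le_iff_dist_le
        (by rwa [Set.insert_comm, Set.pair_comm])] at hB
      rw [norm_sub_rev]
      simpa only [dist_eq_norm] using hB
    have hAB' : ‖B - A‖ ≤ ‖C - B‖ := by
      rw [angle_le_iff_dist_le (by rwa [Set.insert_comm])] at hC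
      rw [norm_sub_rev C]
      simpa only [dist_eq_norm] using hC
    rw [infDist_affineSpan_pair A hBC]
    exact le_antisymm ((le_div_iff₀ hc).2 (widthB_mul_side_le A B C hBC))
      (abs_doubleArea_div_le_widthB hc hAB' le_rfl hCA')
end

section
/- Let K ⊂ ℝ² be a convex body of constant width w (every pair of parallel supporting lines of K is at distance w). Then the shortest closed billiard trajectory in K is 2-periodic; in particular ξ_B(K) = 2w, and no closed polygonal line with three vertices that cannot be translated into the interior of K has Euclidean length less than 2w. -/
open scoped RealInnerProductSpace Pointwise
open MeasureTheory

/-- An acute triangle with sides `a`, `b`, `c`, circumradius `R` and inradius `r` has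
`2 * R + r ≤ (a + b + c) / 2`. Here `S` is twice its area, and `dᵢ` is the inner product of the
two sides meeting at the `i`-th vertex. -/
theorem acute_triangle_side_ineq {a b c d₁ d₂ d₃ S : ℝ} (ha : 0 < a) (hb : 0 < b) (hc : 0 < c)
    (hS : 0 < S) (hd₁ : 0 < d₁) (hd₂ : 0 < d₂) (hd₃ : 0 < d₃)
    (ha2 : a ^ 2 = d₂ + d₃) (hb2 : b ^ 2 = d₁ + d₃) (hc2 : c ^ 2 = d₁ + d₂)
    (hS2 : S ^ 2 = d₁ * d₂ + d₂ * d₃ + d₃ * d₁) :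
    a * b * c + (d₁ * a + d₂ * b + d₃ * c) ≤ (a + b + c) * S := by
  have hm : 0 < a * c + S := by positivity
  have hn : 0 < a * b + S := by positivity
  obtain ⟨m, hm'⟩ : ∃ m, m = a * c + S := ⟨_, rfl⟩
  obtain ⟨n, hn'⟩ : ∃ n, n = a * b + S := ⟨_, rfl⟩
  rw [← hm'] at hm
  rw [← hn'] at hn
  have e₂ : m ^ 2 - d₂ ^ 2 = 2 * S * m := by
    have : (a * c) ^ 2 = d₂ ^ 2 + S ^ 2 := by rw [mul_pow, ha2, hc2, hS2]; ring
    rw [hm']; linear_combination this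
  have e₃ : n ^ 2 - d₃ ^ 2 = 2 * S * n := by
    have : (a * b) ^ 2 = d₃ ^ 2 + S ^ 2 := by rw [mul_pow, ha2, hb2, hS2]; ring
    rw [hn']; linear_combination this
  have h₂ : d₂ < m := by nlinarith [mul_pos hS hm]
  have h₃ : d₃ < n := by nlinarith [mul_pos hS hn]
  have key : 0 ≤ m * n - d₂ * d₃ - d₂ * n - d₃ * m := by
    have hpos : 0 < m * n - d₂ * d₃ + d₂ * n + d₃ * m := by
      nlinarith [mul_pos hd₂ hn, mul_pos hd₃ hm, mul_lt_mul'' h₂ h₃ hd₂.le hd₃.le]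
    have hprod : (m * n - d₂ * d₃ - d₂ * n - d₃ * m) * (m * n - d₂ * d₃ + d₂ * n + d₃ * m)
        = 4 * (m * n) * (d₁ * (d₂ + d₃)) := by
      have : (m ^ 2 - d₂ ^ 2) * (n ^ 2 - d₃ ^ 2) = (2 * S * m) * (2 * S * n) := by rw [e₂, e₃]
      linear_combination this + 4 * (m * n) * hS2
    by_contra! h
    have := mul_neg_of_neg_of_pos h hpos
    rw [hprod] at this
    have : 0 < 4 * (m * n) * (d₁ * (d₂ + d₃)) := by positivity
    linarith
  have hX : (a * c + d₂ - S) * m = d₂ * (d₂ + m) := by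
    have : a * c = m - S := by linarith
    rw [this]; linear_combination e₂
  have hY : (a * b + d₃ - S) * n = d₃ * (d₃ + n) := by
    have : a * b = n - S := by linarith
    rw [this]; linear_combination e₃
  have hXY : (a * c + d₂ - S) * (a * b + d₃ - S) ≤ 2 * (d₂ * d₃) := by
    refine le_of_mul_le_mul_right ?_ (mul_pos hm hn)
    calc _ = ((a * c + d₂ - S) * m) * ((a * b + d₃ - S) * n) := by ring
      _ = (d₂ * d₃) * ((d₂ + m) * (d₃ + n)) := by rw [hX, hY]; ring
      _ ≤ (d₂ * d₃) * (2 * (m * n)) := by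
        refine mul_le_mul_of_nonneg_left ?_ (by positivity)
        linarith
      _ = _ := by ring
  refine le_of_mul_le_mul_left ?_ ha
  linear_combination hXY + (d₁ - S) * ha2 - hS2

theorem inner_sub_cyclic_le {E : Type*} [NormedAddCommGroup E] [InnerProductSpace ℝ E]
    {y₁ y₂ y₃ q₁ q₂ q₃ : E} {ρ : ℝ} (h₁ : ‖y₁‖ ≤ ρ) (h₂ : ‖y₂‖ ≤ ρ) (h₃ : ‖y₃‖ ≤ ρ) :
    ⟪y₁ - y₃, q₁⟫ + ⟪y₂ - y₁, q₂⟫ + ⟪y₃ - y₂, q₃⟫ ≤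
      ρ * (‖q₁ - q₂‖ + ‖q₂ - q₃‖ + ‖q₃ - q₁‖) := by
  have key : ∀ y q : E, ‖y‖ ≤ ρ → ⟪y, q⟫ ≤ ρ * ‖q‖ := fun y q h =>
    (real_inner_le_norm y q).trans (mul_le_mul_of_nonneg_right h (norm_nonneg q))
  have e₁ := key _ (q₁ - q₂) h₁
  have e₂ := key _ (q₂ - q₃) h₂
  have e₃ := key _ (q₃ - q₁) h₃
  simp only [inner_sub_left, inner_sub_right] at *
  linarith

theorem sum_inner_le_of_obtuse {E : Type*} [NormedAddCommGroup E] [InnerProductSpace ℝ E]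
    {v₁ v₂ v₃ : E} (q₁ q₂ q₃ : E) (hv : v₁ + v₂ + v₃ = 0) (h : 0 ≤ ⟪v₂, v₃⟫) :
    ⟪v₁, q₁⟫ + ⟪v₂, q₂⟫ + ⟪v₃, q₃⟫ ≤
      ‖v₁‖ / 2 * (‖q₁ - q₂‖ + ‖q₂ - q₃‖ + ‖q₃ - q₁‖) := by
  obtain rfl : v₁ = -(v₂ + v₃) := by
    rw [add_assoc] at hv; exact eq_neg_of_add_eq_zero_left hv
  have hle : ‖v₂ - v₃‖ ≤ ‖v₂ + v₃‖ := by
    refine (sq_le_sq₀ (norm_nonneg _) (norm_nonneg _)).1 ?_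
    rw [norm_sub_sq_real, norm_add_sq_real]
    linarith
  have := inner_sub_cyclic_le (q₁ := q₁) (q₂ := q₂) (q₃ := q₃) (ρ := ‖-(v₂ + v₃)‖ / 2)
    (y₁ := (1 / 2 : ℝ) • -(v₂ + v₃)) (y₂ := (1 / 2 : ℝ) • (v₂ - v₃))
    (y₃ := (1 / 2 : ℝ) • (v₂ + v₃))
    (by rw [norm_smul]; norm_num; linarith) (by rw [norm_smul, norm_neg]; norm_num; linarith)
    (by rw [norm_smul, norm_neg]; norm_num; linarith)
  convert this using 4
  · module
  · module
  · module

/-- Rotation of the plane by a right angle. -/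
noncomputable def quarterTurn (v : EuclideanSpace ℝ (Fin 2)) : EuclideanSpace ℝ (Fin 2) :=
  !₂[v 1, -v 0]

theorem norm_sq_plane (v : EuclideanSpace ℝ (Fin 2)) : ‖v‖ ^ 2 = v 0 ^ 2 + v 1 ^ 2 := by
  simp [EuclideanSpace.norm_sq_eq]

theorem inner_plane (v u : EuclideanSpace ℝ (Fin 2)) : ⟪v, u⟫ = v 0 * u 0 + v 1 * u 1 := by
  simp [PiLp.inner_apply, mul_comm]

theorem norm_quarterTurn (v : EuclideanSpace ℝ (Fin 2)) : ‖quarterTurn v‖ = ‖v‖ := by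
  rw [← sq_eq_sq₀ (norm_nonneg _) (norm_nonneg _), norm_sq_plane, norm_sq_plane]
  simp [quarterTurn, add_comm]

/-- For an acute triangle with edge vectors `vᵢ`, both bounds hold with its circumradius `ρ`:
the first is obtained from the circumcentre, the second from the orthocentre. -/
theorem acute_bounds {v₁ v₂ v₃ : EuclideanSpace ℝ (Fin 2)} (hv : v₁ + v₂ + v₃ = 0)
    (h₁ : ⟪v₂, v₃⟫ < 0) (h₂ : ⟪v₃, v₁⟫ < 0) (h₃ : ⟪v₁, v₂⟫ < 0)
    (hS : 0 ≤ v₁ 0 * v₂ 1 - v₁ 1 * v₂ 0)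
    (q₁ q₂ q₃ : EuclideanSpace ℝ (Fin 2)) {p₁ p₂ p₃ : EuclideanSpace ℝ (Fin 2)} {w : ℝ}
    (hp₁₂ : ‖p₁ - p₂‖ ≤ w) (hp₂₃ : ‖p₂ - p₃‖ ≤ w) (hp₃₁ : ‖p₃ - p₁‖ ≤ w) :
    ∃ ρ : ℝ, 0 < ρ ∧
      ⟪v₁, q₁⟫ + ⟪v₂, q₂⟫ + ⟪v₃, q₃⟫ ≤ ρ * (‖q₁ - q₂‖ + ‖q₂ - q₃‖ + ‖q₃ - q₁‖) ∧
      2 * ρ * w ≤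
        (w * ‖v₁‖ + ⟪v₁, p₁⟫) + (w * ‖v₂‖ + ⟪v₂, p₂⟫) + (w * ‖v₃‖ + ⟪v₃, p₃⟫) := by
  have hw : 0 ≤ w := (norm_nonneg _).trans hp₁₂
  obtain rfl : v₃ = -(v₁ + v₂) := by rw [add_comm] at hv; exact eq_neg_of_add_eq_zero_left hv
  set v₃ := -(v₁ + v₂) with hv₃
  have z0 : v₃ 0 = -(v₁ 0 + v₂ 0) := by simp [hv₃]
  have z1 : v₃ 1 = -(v₁ 1 + v₂ 1) := by simp [hv₃]
  obtain ⟨d₁, hd₁⟩ : ∃ d, d = -⟪v₂, v₃⟫ := ⟨_, rfl⟩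
  obtain ⟨d₂, hd₂⟩ : ∃ d, d = -⟪v₃, v₁⟫ := ⟨_, rfl⟩
  obtain ⟨d₃, hd₃⟩ : ∃ d, d = -⟪v₁, v₂⟫ := ⟨_, rfl⟩
  have d₁pos : 0 < d₁ := by linarith
  have d₂pos : 0 < d₂ := by linarith
  have d₃pos : 0 < d₃ := by linarith
  obtain ⟨S, hSdef⟩ : ∃ S, S = v₁ 0 * v₂ 1 - v₁ 1 * v₂ 0 := ⟨_, rfl⟩
  rw [← hSdef] at hS
  rw [inner_plane, z0, z1] at hd₁ hd₂
  rw [inner_plane] at hd₃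
  have hS2 : S ^ 2 = d₁ * d₂ + d₂ * d₃ + d₃ * d₁ := by
    rw [hSdef, hd₁, hd₂, hd₃]; ring
  have Spos : 0 < S := by
    refine lt_of_le_of_ne hS fun h => ?_
    have : 0 < S ^ 2 := by rw [hS2]; positivity
    rw [← h] at this; simp at this
  have ha2 : ‖v₁‖ ^ 2 = d₂ + d₃ := by rw [norm_sq_plane, hd₂, hd₃]; ring
  have hb2 : ‖v₂‖ ^ 2 = d₁ + d₃ := by rw [norm_sq_plane, hd₁, hd₃]; ring
  have hc2 : ‖v₃‖ ^ 2 = d₁ + d₂ := by rw [norm_sq_plane, z0, z1, hd₁, hd₂]; ring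
  have pos_of_sq : ∀ {x y : ℝ}, 0 ≤ x → x ^ 2 = y → 0 < y → 0 < x := by
    rintro x y hx rfl hy
    exact lt_of_le_of_ne hx fun h => by rw [← h] at hy; simp at hy
  have apos := pos_of_sq (norm_nonneg v₁) ha2 (by positivity)
  have bpos := pos_of_sq (norm_nonneg v₂) hb2 (by positivity)
  have cpos := pos_of_sq (norm_nonneg v₃) hc2 (by positivity)
  have main := acute_triangle_side_ineq apos bpos cpos Spos d₁pos d₂pos d₃pos ha2 hb2 hc2 hS2
  have t₁ : v₁ = (d₂ / S) • quarterTurn v₂ - (d₃ / S) • quarterTurn v₃ := by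
    ext i
    fin_cases i <;> simp [quarterTurn, z0, z1] <;> field_simp <;> rw [hSdef, hd₂, hd₃] <;> ring
  have t₂ : v₂ = (d₃ / S) • quarterTurn v₃ - (d₁ / S) • quarterTurn v₁ := by
    ext i
    fin_cases i <;> simp [quarterTurn, z0, z1] <;> field_simp <;> rw [hSdef, hd₁, hd₃] <;> ring
  have t₃ : v₃ = (d₁ / S) • quarterTurn v₁ - (d₂ / S) • quarterTurn v₂ := by
    ext i
    fin_cases i <;> simp [quarterTurn, z0, z1] <;> field_simp <;> rw [hSdef, hd₁, hd₂] <;> ring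
  have norm_smul_turn : ∀ {d : ℝ} (v : EuclideanSpace ℝ (Fin 2)), 0 < d →
      ‖(d / S) • quarterTurn v‖ = d / S * ‖v‖ := fun v hd => by
    rw [norm_smul, norm_quarterTurn, Real.norm_of_nonneg (by positivity)]
  have radius : ∀ {d : ℝ} (v : EuclideanSpace ℝ (Fin 2)),
      ‖v‖ ^ 2 * (S ^ 2 + d ^ 2) = ‖v₁‖ ^ 2 * ‖v₂‖ ^ 2 * ‖v₃‖ ^ 2 →
      ‖(1 / 2 : ℝ) • (v + (d / S) • quarterTurn v)‖ ≤ ‖v₁‖ * ‖v₂‖ * ‖v₃‖ / (2 * S) := by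
    intro d v h
    refine (sq_le_sq₀ (norm_nonneg _) (by positivity)).1 (le_of_eq ?_)
    rw [div_pow, mul_pow, mul_pow, ← h, norm_sq_plane, norm_sq_plane]
    simp [quarterTurn]
    field_simp
    ring
  have r₁ := radius (d := d₁) v₁ (by rw [ha2, hb2, hc2, hS2]; ring)
  have r₂ := radius (d := d₂) v₂ (by rw [ha2, hb2, hc2, hS2]; ring)
  have r₃ := radius (d := d₃) v₃ (by rw [ha2, hb2, hc2, hS2]; ring)
  have n₁ := norm_smul_turn v₁ d₁pos
  have n₂ := norm_smul_turn v₂ d₂pos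
  have n₃ := norm_smul_turn v₃ d₃pos
  clear_value v₃
  generalize (d₁ / S) • quarterTurn v₁ = z₁ at *
  generalize (d₂ / S) • quarterTurn v₂ = z₂ at *
  generalize (d₃ / S) • quarterTurn v₃ = z₃ at *
  refine ⟨‖v₁‖ * ‖v₂‖ * ‖v₃‖ / (2 * S), by positivity, ?_, ?_⟩
  · convert inner_sub_cyclic_le (q₁ := q₁) (q₂ := q₂) (q₃ := q₃) r₁ r₂ r₃ using 4
    · rw [t₁, t₃]; module
    · rw [t₁, t₂]; module
    · rw [t₂, t₃]; module
  · have bound : ∀ z p : EuclideanSpace ℝ (Fin 2), ‖p‖ ≤ w → ⟪z, p⟫ ≤ ‖z‖ * w := fun z p h =>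
      (real_inner_le_norm z p).trans (mul_le_mul_of_nonneg_left h (norm_nonneg z))
    have b₁ := bound z₁ _ hp₂₃
    have b₂ := bound z₂ _ hp₃₁
    have b₃ := bound z₃ _ hp₁₂
    have hsum : ⟪v₁, p₁⟫ + ⟪v₂, p₂⟫ + ⟪v₃, p₃⟫ =
        -(⟪z₁, p₂ - p₃⟫ + ⟪z₂, p₃ - p₁⟫ + ⟪z₃, p₁ - p₂⟫) := by
      nth_rewrite 1 [t₁]
      nth_rewrite 1 [t₂]
      nth_rewrite 1 [t₃]
      simp only [inner_sub_left, inner_sub_right]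
      ring
    rw [n₁] at b₁
    rw [n₂] at b₂
    rw [n₃] at b₃
    have hdiv : 2 * (‖v₁‖ * ‖v₂‖ * ‖v₃‖ / (2 * S)) +
        (d₁ / S * ‖v₁‖ + d₂ / S * ‖v₂‖ + d₃ / S * ‖v₃‖) ≤ ‖v₁‖ + ‖v₂‖ + ‖v₃‖ := by
      rw [← div_le_iff₀ Spos] at main
      refine (le_of_eq ?_).trans main
      field_simp
    have := mul_le_mul_of_nonneg_right hdiv hw
    linarith

/-- If no translate of the points `q i` lies in the interior of `K`, then there are outer normals
summing to zero which certify it. -/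
theorem exists_normals_of_not_translatable {ι E : Type*} [Fintype ι] [NormedAddCommGroup E]
    [InnerProductSpace ℝ E] [CompleteSpace E] {K : Set E} (hc : Convex ℝ K)
    (hne : (interior K).Nonempty) (q : ι → E)
    (h : ∀ t : E, ∃ i, q i + t ∉ interior K) :
    ∃ v : ι → E, v ≠ 0 ∧ ∑ i, v i = 0 ∧
      ∀ k : ι → E, (∀ i, k i ∈ K) → ∑ i, ⟪v i, k i⟫ ≤ ∑ i, ⟪v i, q i⟫ := by
  classical
  obtain ⟨x₀, hx₀⟩ := hne
  have hdisj : Disjoint (Set.univ.pi fun _ : ι => interior K)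
      (Set.range fun t : E => fun i => q i + t) := by
    rw [Set.disjoint_left]
    rintro _ hx ⟨t, rfl⟩
    obtain ⟨i, hi⟩ := h t
    exact hi (hx i trivial)
  have hconv : Convex ℝ (Set.range fun t : E => fun i => q i + t) := by
    rintro _ ⟨s, rfl⟩ _ ⟨t, rfl⟩ a b _ _ hab
    refine ⟨a • s + b • t, funext fun i => ?_⟩
    calc q i + (a • s + b • t) = (a + b) • q i + (a • s + b • t) := by rw [hab, one_smul]
      _ = a • (q i + s) + b • (q i + t) := by module
  obtain ⟨f, u, hfu, huf⟩ := geometric_hahn_banach_open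
    (convex_pi fun _ _ => hc.interior) (isOpen_set_pi Set.finite_univ fun _ _ => isOpen_interior)
    hconv hdisj
  let v : ι → E := fun i =>
    (InnerProductSpace.toDual ℝ E).symm (f.comp (ContinuousLinearMap.single ℝ (fun _ => E) i))
  have hf : ∀ x, f x = ∑ i, ⟪v i, x i⟫ := fun x => by
    simp only [v, InnerProductSpace.toDual_symm_apply]
    conv_lhs => rw [← Finset.univ_sum_single x, map_sum]
    rfl
  have hq : ∀ t, u ≤ ∑ i, ⟪v i, q i⟫ + ⟪∑ i, v i, t⟫ := fun t => by
    have := huf _ ⟨t, rfl⟩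
    rwa [hf, Finset.sum_congr rfl fun i _ => inner_add_right _ _ _, Finset.sum_add_distrib,
      ← sum_inner] at this
  have hclosed : ∀ k : ι → E, (∀ i, k i ∈ K) → ∑ i, ⟪v i, k i⟫ ≤ u := fun k hk => by
    rw [← hf]
    have hmem : k ∈ closure (Set.univ.pi fun _ : ι => interior K) := by
      rw [closure_pi_set]
      intro i _
      rw [hc.closure_interior_eq_closure_of_nonempty_interior ⟨x₀, hx₀⟩]
      exact subset_closure (hk i)
    exact closure_minimal (fun x hx => (hfu x hx).le)
      (isClosed_le f.continuous continuous_const) hmem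
  refine ⟨v, ?_, ?_, fun k hk => (hclosed k hk).trans (by simpa using hq 0)⟩
  · intro hv
    have h₁ := hfu (fun _ => x₀) fun _ _ => hx₀
    have h₂ := hq 0
    rw [hf] at h₁
    simp [hv] at h₁ h₂
    linarith
  · by_contra hne
    have hpos : 0 < ⟪∑ i, v i, ∑ i, v i⟫ := real_inner_self_pos.2 hne
    have h₁ := hq (-((∑ i, ⟪v i, q i⟫ - u + 1) / ⟪∑ i, v i, ∑ i, v i⟫) • ∑ i, v i)
    rw [inner_smul_right, neg_mul, div_mul_cancel₀ _ hpos.ne'] at h₁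
    linarith

theorem exists_support_points {n : ℕ} {K : Set (EuclideanSpace ℝ (Fin n))} {w : ℝ}
    (hK : IsCompact K) (hne : K.Nonempty)
    (hw : ∀ p : EuclideanSpace ℝ (Fin n), ‖p‖ = 1 →
      sSup ((fun q => ⟪p, q⟫) '' K) - sInf ((fun q => ⟪p, q⟫) '' K) = w)
    (v : EuclideanSpace ℝ (Fin n)) :
    ∃ x ∈ K, ∃ p ∈ K, (∀ k ∈ K, ⟪v, p⟫ ≤ ⟪v, k⟫ ∧ ⟪v, k⟫ ≤ ⟪v, x⟫) ∧
      ⟪v, x⟫ = w * ‖v‖ + ⟪v, p⟫ := by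
  have hcont : ContinuousOn (fun k => ⟪v, k⟫) K := by fun_prop
  obtain ⟨x, hx, hxmax⟩ := hK.exists_isMaxOn hne hcont
  obtain ⟨p, hp, hpmin⟩ := hK.exists_isMinOn hne hcont
  refine ⟨x, hx, p, hp, fun k hk => ⟨hpmin hk, hxmax hk⟩, ?_⟩
  rcases eq_or_ne v 0 with rfl | hv
  · simp
  have hvpos : 0 < ‖v‖ := norm_pos_iff.2 hv
  have hscale : ∀ k, ⟪‖v‖⁻¹ • v, k⟫ = ‖v‖⁻¹ * ⟪v, k⟫ := fun k => real_inner_smul_left _ _ _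
  have hsup : IsGreatest ((fun q => ⟪‖v‖⁻¹ • v, q⟫) '' K) (‖v‖⁻¹ * ⟪v, x⟫) := by
    refine ⟨⟨x, hx, hscale x⟩, ?_⟩
    rintro _ ⟨k, hk, rfl⟩
    simp only [hscale]
    exact mul_le_mul_of_nonneg_left (hxmax hk) (by positivity)
  have hinf : IsLeast ((fun q => ⟪‖v‖⁻¹ • v, q⟫) '' K) (‖v‖⁻¹ * ⟪v, p⟫) := by
    refine ⟨⟨p, hp, hscale p⟩, ?_⟩
    rintro _ ⟨k, hk, rfl⟩
    simp only [hscale]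
    exact mul_le_mul_of_nonneg_left (hpmin hk) (by positivity)
  have hwidth := hw (‖v‖⁻¹ • v) (norm_smul_inv_norm hv)
  rw [hsup.csSup_eq, hinf.csInf_eq] at hwidth
  rw [← hwidth]
  field_simp
  ring

section ConstantWidth

variable {K : Set (EuclideanSpace ℝ (Fin 2))} {w : ℝ}

theorem width_nonneg (hK : IsCompact K) (hne : K.Nonempty)
    (hw : ∀ p : EuclideanSpace ℝ (Fin 2), ‖p‖ = 1 →
      sSup ((fun q => ⟪p, q⟫) '' K) - sInf ((fun q => ⟪p, q⟫) '' K) = w) : 0 ≤ w := by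
  obtain ⟨x, hx, p, hp, h, hxp⟩ :=
    exists_support_points hK hne hw (EuclideanSpace.single 0 1)
  have := (h x hx).1
  simp at hxp this
  linarith

theorem norm_sub_le_width (hK : IsCompact K)
    (hw : ∀ p : EuclideanSpace ℝ (Fin 2), ‖p‖ = 1 →
      sSup ((fun q => ⟪p, q⟫) '' K) - sInf ((fun q => ⟪p, q⟫) '' K) = w)
    {a b : EuclideanSpace ℝ (Fin 2)} (ha : a ∈ K) (hb : b ∈ K) : ‖a - b‖ ≤ w := by
  rcases eq_or_ne (a - b) 0 with h0 | h0
  · rw [h0, norm_zero]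
    exact width_nonneg hK ⟨a, ha⟩ hw
  obtain ⟨x, hx, p, hp, h, hxp⟩ := exists_support_points hK ⟨a, ha⟩ hw (a - b)
  have h₁ := (h a ha).2
  have h₂ := (h b hb).1
  have h₃ : ⟪a - b, a⟫ - ⟪a - b, b⟫ = ‖a - b‖ * ‖a - b‖ := by
    rw [← inner_sub_right, real_inner_self_eq_norm_mul_norm]
  exact le_of_mul_le_mul_right (by linarith) (norm_pos_iff.2 h0)

theorem two_mul_width_le_of_obtuse (hK : IsCompact K) (hne : K.Nonempty)
    (hw : ∀ p : EuclideanSpace ℝ (Fin 2), ‖p‖ = 1 →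
      sSup ((fun q => ⟪p, q⟫) '' K) - sInf ((fun q => ⟪p, q⟫) '' K) = w)
    {v₁ v₂ v₃ q₁ q₂ q₃ : EuclideanSpace ℝ (Fin 2)} (hv : v₁ + v₂ + v₃ = 0)
    (hv0 : ¬(v₁ = 0 ∧ v₂ = 0 ∧ v₃ = 0))
    (h : ∀ k₁ ∈ K, ∀ k₂ ∈ K, ∀ k₃ ∈ K,
      ⟪v₁, k₁⟫ + ⟪v₂, k₂⟫ + ⟪v₃, k₃⟫ ≤ ⟪v₁, q₁⟫ + ⟪v₂, q₂⟫ + ⟪v₃, q₃⟫)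
    (hobt : 0 ≤ ⟪v₂, v₃⟫) :
    2 * w ≤ ‖q₁ - q₂‖ + ‖q₂ - q₃‖ + ‖q₃ - q₁‖ := by
  have hpos : 0 < ‖v₁‖ := by
    refine norm_pos_iff.2 fun h0 => hv0 ?_
    rw [h0, zero_add] at hv
    have h₂ : v₂ = -v₃ := eq_neg_of_add_eq_zero_left hv
    rw [h₂, inner_neg_left, real_inner_self_eq_norm_sq] at hobt
    have h₃ : v₃ = 0 := norm_eq_zero.1 (pow_eq_zero_iff two_ne_zero |>.1
      (le_antisymm (by linarith) (sq_nonneg _)))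
    exact ⟨h0, by rw [h₂, h₃, neg_zero], h₃⟩
  obtain ⟨x, hx, p, hp, -, hxp⟩ := exists_support_points hK hne hw v₁
  have h₁ := h x hx p hp p hp
  have h₂ := sum_inner_le_of_obtuse q₁ q₂ q₃ hv hobt
  have h₃ : ⟪v₁, p⟫ + ⟪v₂, p⟫ + ⟪v₃, p⟫ = 0 := by
    rw [← inner_add_left, ← inner_add_left, hv, inner_zero_left]
  refine le_of_mul_le_mul_left ?_ hpos
  linarith

theorem two_mul_width_le_of_acute (hK : IsCompact K) (hne : K.Nonempty)
    (hw : ∀ p : EuclideanSpace ℝ (Fin 2), ‖p‖ = 1 →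
      sSup ((fun q => ⟪p, q⟫) '' K) - sInf ((fun q => ⟪p, q⟫) '' K) = w)
    {v₁ v₂ v₃ q₁ q₂ q₃ : EuclideanSpace ℝ (Fin 2)} (hv : v₁ + v₂ + v₃ = 0)
    (h : ∀ k₁ ∈ K, ∀ k₂ ∈ K, ∀ k₃ ∈ K,
      ⟪v₁, k₁⟫ + ⟪v₂, k₂⟫ + ⟪v₃, k₃⟫ ≤ ⟪v₁, q₁⟫ + ⟪v₂, q₂⟫ + ⟪v₃, q₃⟫)
    (h₁ : ⟪v₂, v₃⟫ < 0) (h₂ : ⟪v₃, v₁⟫ < 0) (h₃ : ⟪v₁, v₂⟫ < 0)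
    (hS : 0 ≤ v₁ 0 * v₂ 1 - v₁ 1 * v₂ 0) :
    2 * w ≤ ‖q₁ - q₂‖ + ‖q₂ - q₃‖ + ‖q₃ - q₁‖ := by
  obtain ⟨x₁, hx₁, p₁, hp₁, -, e₁⟩ := exists_support_points hK hne hw v₁
  obtain ⟨x₂, hx₂, p₂, hp₂, -, e₂⟩ := exists_support_points hK hne hw v₂
  obtain ⟨x₃, hx₃, p₃, hp₃, -, e₃⟩ := exists_support_points hK hne hw v₃
  obtain ⟨ρ, hρ, hq, hp⟩ := acute_bounds hv h₁ h₂ h₃ hS q₁ q₂ q₃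
    (norm_sub_le_width hK hw hp₁ hp₂) (norm_sub_le_width hK hw hp₂ hp₃)
    (norm_sub_le_width hK hw hp₃ hp₁)
  rw [← e₁, ← e₂, ← e₃] at hp
  have := h x₁ hx₁ x₂ hx₂ x₃ hx₃
  refine le_of_mul_le_mul_left ?_ hρ
  linarith

theorem two_mul_width_le_triangle (hK : IsConvexBody K)
    (hw : ∀ p : EuclideanSpace ℝ (Fin 2), ‖p‖ = 1 →
      sSup ((fun q => ⟪p, q⟫) '' K) - sInf ((fun q => ⟪p, q⟫) '' K) = w)
    {q : Fin 3 → EuclideanSpace ℝ (Fin 2)} (hq : ∀ t, ∃ i, q i + t ∉ interior K) :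
    2 * w ≤ ‖q 0 - q 1‖ + ‖q 1 - q 2‖ + ‖q 2 - q 0‖ := by
  obtain ⟨hcomp, hconv, hint⟩ := hK
  have hne : K.Nonempty := hint.mono interior_subset
  obtain ⟨v, hv0, hv, h⟩ := exists_normals_of_not_translatable hconv hint q hq
  have hv0' : ¬(v 0 = 0 ∧ v 1 = 0 ∧ v 2 = 0) := fun ⟨a, b, c⟩ =>
    hv0 (funext fun i => by fin_cases i <;> assumption)
  have h' : ∀ k₁ ∈ K, ∀ k₂ ∈ K, ∀ k₃ ∈ K, ⟪v 0, k₁⟫ + ⟪v 1, k₂⟫ + ⟪v 2, k₃⟫ ≤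
      ⟪v 0, q 0⟫ + ⟪v 1, q 1⟫ + ⟪v 2, q 2⟫ := fun k₁ h₁ k₂ h₂ k₃ h₃ => by
    have := h ![k₁, k₂, k₃] fun i => by fin_cases i <;> assumption
    simpa [Fin.sum_univ_three] using this
  rw [Fin.sum_univ_three] at hv
  clear h hv0
  generalize v 0 = v₁, v 1 = v₂, v 2 = v₃ at *
  generalize q 0 = q₁, q 1 = q₂, q 2 = q₃ at *
  rcases le_or_gt 0 ⟪v₂, v₃⟫ with h₁ | h₁
  · exact two_mul_width_le_of_obtuse hcomp hne hw hv hv0' h' h₁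
  rcases le_or_gt 0 ⟪v₃, v₁⟫ with h₂ | h₂
  · have := two_mul_width_le_of_obtuse (v₁ := v₂) (v₂ := v₃) (v₃ := v₁)
      (q₁ := q₂) (q₂ := q₃) (q₃ := q₁) hcomp hne hw
      (by rw [← hv]; abel) (by tauto)
      (fun k₁ m₁ k₂ m₂ k₃ m₃ => by linarith [h' k₃ m₃ k₁ m₁ k₂ m₂]) h₂
    linarith
  rcases le_or_gt 0 ⟪v₁, v₂⟫ with h₃ | h₃
  · have := two_mul_width_le_of_obtuse (v₁ := v₃) (v₂ := v₁) (v₃ := v₂)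
      (q₁ := q₃) (q₂ := q₁) (q₃ := q₂) hcomp hne hw
      (by rw [← hv]; abel) (by tauto)
      (fun k₁ m₁ k₂ m₂ k₃ m₃ => by linarith [h' k₂ m₂ k₃ m₃ k₁ m₁]) h₃
    linarith
  rcases le_total 0 (v₁ 0 * v₂ 1 - v₁ 1 * v₂ 0) with hS | hS
  · exact two_mul_width_le_of_acute hcomp hne hw hv h' h₁ h₂ h₃ hS
  · have := two_mul_width_le_of_acute (v₁ := v₂) (v₂ := v₁) (v₃ := v₃)
      (q₁ := q₂) (q₂ := q₁) (q₃ := q₃) hcomp hne hw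
      (by rw [← hv]; abel)
      (fun k₁ m₁ k₂ m₂ k₃ m₃ => by linarith [h' k₂ m₂ k₁ m₁ k₃ m₃])
      (by rwa [real_inner_comm]) (by rwa [real_inner_comm]) (by rwa [real_inner_comm])
      (by linarith)
    rw [norm_sub_rev q₂ q₁, norm_sub_rev q₁ q₃, norm_sub_rev q₃ q₂] at this
    linarith

theorem two_mul_width_le_polygon (hK : IsConvexBody K)
    (hw : ∀ p : EuclideanSpace ℝ (Fin 2), ‖p‖ = 1 →
      sSup ((fun q => ⟪p, q⟫) '' K) - sInf ((fun q => ⟪p, q⟫) '' K) = w)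
    {m : ℕ} (hm : 2 ≤ m) {q : ℕ → EuclideanSpace ℝ (Fin 2)} (hq : NotTranslatableInto m q K) :
    2 * w ≤ ∑ i ∈ Finset.range m, ‖q ((i + 1) % m) - q i‖ := by
  set Q : ℕ → EuclideanSpace ℝ (Fin 2) := fun i => q (i % m) with hQ
  have hlen : ∑ i ∈ Finset.range m, ‖q ((i + 1) % m) - q i‖ =
      ∑ i ∈ Finset.Ico 0 m, dist (Q i) (Q (i + 1)) := by
    rw [← Finset.range_eq_Ico]
    refine Finset.sum_congr rfl fun i hi => ?_
    simp only [hQ, Nat.mod_eq_of_lt (Finset.mem_range.1 hi), dist_eq_norm]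
    rw [norm_sub_rev]
  obtain ⟨I, hI, hcard, hempty⟩ : ∃ I ⊆ Finset.range (m + 1), I.card = 3 ∧
      ¬(⋂ i ∈ I, {t | Q i + t ∈ interior K}).Nonempty := by
    by_contra! hcon
    obtain ⟨t, ht⟩ := Convex.helly_theorem (𝕜 := ℝ) (F := fun i => {t | Q i + t ∈ interior K})
      (s := Finset.range (m + 1)) (by simp; omega)
      (fun i _ => hK.2.1.interior.translate_preimage_right (Q i))
      (fun I hI hc => hcon I hI (by simpa using hc))
    obtain ⟨i, hi, hit⟩ := hq t
    simp only [Set.mem_iInter, Finset.mem_range] at ht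
    have := ht i (by omega)
    simp only [hQ, Nat.mod_eq_of_lt hi] at this
    exact hit this
  set o := I.orderEmbOfFin hcard with ho
  have htri : 2 * w ≤ ‖Q (o 0) - Q (o 1)‖ + ‖Q (o 1) - Q (o 2)‖ + ‖Q (o 2) - Q (o 0)‖ := by
    refine two_mul_width_le_triangle (q := fun i => Q (o i)) hK hw fun t => ?_
    by_contra! hcon
    refine hempty ⟨t, Set.mem_iInter₂.2 fun i hi => ?_⟩
    obtain ⟨j, rfl⟩ : i ∈ Set.range o := by rw [ho, Finset.range_orderEmbOfFin]; exact hi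
    exact hcon j
  have h01 : o 0 ≤ o 1 := o.monotone (by decide)
  have h12 : o 1 ≤ o 2 := o.monotone (by decide)
  have h2 : o 2 ≤ m := by
    have : o 2 < m + 1 := Finset.mem_range.1 (hI (I.orderEmbOfFin_mem hcard 2))
    omega
  have hclose : Q m = Q 0 := by simp [hQ]
  have d₀ := dist_le_Ico_sum_dist Q (Nat.zero_le (o 0))
  have d₁ := dist_le_Ico_sum_dist Q h01
  have d₂ := dist_le_Ico_sum_dist Q h12
  have d₃ := dist_le_Ico_sum_dist Q h2
  have d₄ := dist_triangle (Q (o 2)) (Q 0) (Q (o 0))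
  rw [hclose] at d₃
  rw [hlen, ← Finset.sum_Ico_consecutive _ (Nat.zero_le (o 2)) h2,
    ← Finset.sum_Ico_consecutive _ (Nat.zero_le (o 1)) h12,
    ← Finset.sum_Ico_consecutive _ (Nat.zero_le (o 0)) h01]
  simp only [← dist_eq_norm] at htri
  linarith

theorem notTranslatableInto_segment (hK : IsCompact K)
    (hw : ∀ p : EuclideanSpace ℝ (Fin 2), ‖p‖ = 1 →
      sSup ((fun q => ⟪p, q⟫) '' K) - sInf ((fun q => ⟪p, q⟫) '' K) = w)
    {e : EuclideanSpace ℝ (Fin 2)} (he : ‖e‖ = 1) :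
    NotTranslatableInto 2 (fun i => (i * w) • e) K := by
  intro t
  by_contra! h
  have h₀ := h 0 (by norm_num)
  have h₁ := h 1 (by norm_num)
  simp only [Nat.cast_zero, zero_mul, zero_smul, zero_add, Nat.cast_one, one_mul] at h₀ h₁
  have hcont : Filter.Tendsto (fun ε : ℝ => w • e + t + ε • e) (nhdsWithin 0 (Set.Ioi 0))
      (nhds (w • e + t)) := by
    refine Filter.Tendsto.mono_left ?_ nhdsWithin_le_nhds
    have : Continuous fun ε : ℝ => w • e + t + ε • e := by fun_prop
    simpa using this.tendsto 0
  obtain ⟨ε, hε, hpos⟩ := ((hcont.eventually (mem_interior_iff_mem_nhds.1 h₁)).and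
    self_mem_nhdsWithin).exists
  have hle := norm_sub_le_width hK hw hε (interior_subset h₀)
  have hw0 := width_nonneg hK ⟨_, hε⟩ hw
  have hsub : w • e + t + ε • e - t = (w + ε) • e := by module
  rw [hsub, norm_smul, he, mul_one] at hle
  have hpos' : 0 < ε := hpos
  linarith [Real.le_norm_self (w + ε)]

end ConstantWidth

/-- In a planar body of constant width `w`, the shortest closed billiard trajectory is
2-periodic: `ξ_B(K) = 2w`, and no closed polygonal line with three vertices that cannot
be translated into the interior of `K` has length less than `2w`. -/
theorem constant_width_shortest_two_periodic (K : Set (EuclideanSpace ℝ (Fin 2)))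
    (hK : IsConvexBody K) (w : ℝ)
    (hw : ∀ p : EuclideanSpace ℝ (Fin 2), ‖p‖ = 1 →
      sSup ((fun q => ⟪p, q⟫) '' K) - sInf ((fun q => ⟪p, q⟫) '' K) = w) :
    xiB K = 2 * w ∧
    ∀ q : ℕ → EuclideanSpace ℝ (Fin 2), NotTranslatableInto 3 q K →
      2 * w ≤ ∑ i ∈ Finset.range 3, ‖q ((i + 1) % 3) - q i‖ := by
  have hne : K.Nonempty := hK.2.2.mono interior_subset
  have hmem : ∃ m : ℕ, 2 ≤ m ∧ ∃ q : ℕ → EuclideanSpace ℝ (Fin 2),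
      NotTranslatableInto m q K ∧
      2 * w = ∑ i ∈ Finset.range m, ‖q ((i + 1) % m) - q i‖ := by
    have he : ‖(EuclideanSpace.single 0 1 : EuclideanSpace ℝ (Fin 2))‖ = 1 := by simp
    refine ⟨2, le_rfl, _, notTranslatableInto_segment hK.1 hw he, ?_⟩
    simp [Finset.sum_range_succ, norm_smul, abs_of_nonneg (width_nonneg hK.1 hne hw)]
    ring
  refine ⟨le_antisymm (csInf_le ⟨0, ?_⟩ hmem) (le_csInf ⟨_, hmem⟩ ?_), fun q hq =>
    two_mul_width_le_polygon hK hw (by norm_num) hq⟩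
  · rintro _ ⟨m, -, q, -, rfl⟩
    exact Finset.sum_nonneg fun _ _ => norm_nonneg _
  · rintro _ ⟨m, hm, q, hq, rfl⟩
    exact two_mul_width_le_polygon hK hw hm hq
end
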